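/- arXiv:1502.07452 — 3 statements merged into one kernel-verified Lean document; each statement's English description precedes it below -/
import Mathlib

section
/- Fix n, d ∈ ℕ, 1 ≤ p < ∞, T > 0, x ∈ ℝ^n, and smooth vector fields X_0, X_1, …, X_d : ℝ^n → ℝ^n. Then the set of controls u = (u_1, …, u_d) ∈ L^p([0,T], ℝ^d) for which there exists an absolutely continuous curve γ : [0,T] → ℝ^n satisfying γ(t) = x + ∫_0^t ( X_0(γ(s)) + Σ_{i=1}^d u_i(s) X_i(γ(s)) ) ds for all t ∈ [0,T] is an open subset of L^p([0,T], ℝ^d). -/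
open MeasureTheory Set

noncomputable section

/-- `γ` is the trajectory on `[0,T]` of the control `u` starting at `x`, for the affine
control system `γ' = X₀(γ) + Σᵢ uᵢ Xᵢ(γ)`: a continuous (hence, given the integral
equation, absolutely continuous) curve satisfying
`γ(t) = x + ∫₀ᵗ (X₀(γ(s)) + Σᵢ uᵢ(s) Xᵢ(γ(s))) ds` on `[0,T]`. -/
def IsTrajectory {n d : ℕ}
    (X0 : EuclideanSpace ℝ (Fin n) → EuclideanSpace ℝ (Fin n))
    (X : Fin d → EuclideanSpace ℝ (Fin n) → EuclideanSpace ℝ (Fin n))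
    (x : EuclideanSpace ℝ (Fin n)) (T : ℝ)
    (u : ℝ → EuclideanSpace ℝ (Fin d))
    (γ : ℝ → EuclideanSpace ℝ (Fin n)) : Prop :=
  ContinuousOn γ (Set.Icc 0 T) ∧
    ∀ t ∈ Set.Icc (0:ℝ) T,
      γ t = x + ∫ s in (0:ℝ)..t, (X0 (γ s) + ∑ i, u s i • X i (γ s))

lemma exists_trunc {F : Type*} [NormedAddCommGroup F] {μ : Measure ℝ} {u : ℝ → F}
    (hu : Integrable u μ) {δ : ℝ} (hδ : 0 < δ) :
    ∃ N : ℕ, ∫ s, max (‖u s‖ - N) 0 ∂μ < δ := by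
  have h : Filter.Tendsto (fun N : ℕ => ∫ s, max (‖u s‖ - N) 0 ∂μ) Filter.atTop
      (nhds (∫ s, (0:ℝ) ∂μ)) := by
    apply tendsto_integral_of_dominated_convergence (fun s => ‖u s‖)
    · intro N
      exact (hu.1.norm.sub aestronglyMeasurable_const).sup aestronglyMeasurable_const
    · exact hu.norm
    · intro N
      refine Filter.Eventually.of_forall fun s => ?_
      rw [Real.norm_of_nonneg (le_max_right _ _)]
      apply max_le _ (norm_nonneg _)
      have : (0:ℝ) ≤ N := Nat.cast_nonneg N
      linarith
    · refine Filter.Eventually.of_forall fun s => ?_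
      apply tendsto_const_nhds.congr'
      obtain ⟨N0, hN0⟩ := exists_nat_ge ‖u s‖
      filter_upwards [Filter.eventually_ge_atTop N0] with N hN
      rw [max_eq_right]
      have : (N0:ℝ) ≤ N := by exact_mod_cast hN
      linarith
  simp only [integral_zero] at h
  exact ((h.eventually (gt_mem_nhds hδ))).exists

lemma integral_sub_le {T t : ℝ} (ht : t ∈ Icc 0 T) {g : ℝ → ℝ}
    (hg : IntegrableOn g (Icc 0 T)) (h0 : ∀ s, 0 ≤ g s) :
    ∫ s in (0:ℝ)..t, g s ≤ ∫ s in Icc 0 T, g s := by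
  rw [intervalIntegral.integral_of_le ht.1]
  apply setIntegral_mono_set hg (Filter.Eventually.of_forall h0)
  exact (Ioc_subset_Icc_self.trans (Icc_subset_Icc_right ht.2)).eventuallyLE

lemma ii_of {E : Type*} [NormedAddCommGroup E] {T t : ℝ} (ht : t ∈ Icc 0 T) {g : ℝ → E}
    (hg : IntegrableOn g (Icc 0 T)) : IntervalIntegrable g volume 0 t := by
  rw [intervalIntegrable_iff_integrableOn_Icc_of_le ht.1]
  exact hg.mono_set (Icc_subset_Icc_right ht.2)

lemma weight_est {F : Type*} [NormedAddCommGroup F] {T : ℝ} {u0 u : ℝ → F}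
    (hu0 : IntegrableOn u0 (Icc 0 T)) (hu : IntegrableOn u (Icc 0 T))
    {L : ℝ} (hL : 0 < L) {N : ℕ}
    (hN : ∫ s in Icc 0 T, max (‖u0 s‖ - N) 0 < 1 / (8 * L))
    (hε : ∫ s in Icc 0 T, ‖u s - u0 s‖ < 1 / (8 * L)) {t : ℝ} (ht : t ∈ Icc 0 T) :
    ∫ s in (0:ℝ)..t, (1 + ‖u s‖) * Real.exp (4 * L * (1 + N) * s)
      ≤ Real.exp (4 * L * (1 + N) * t) / (2 * L) := by
  set lam := 4 * L * (1 + (N:ℝ)) with hlam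
  have hlam0 : 0 < lam := by positivity
  have hT : IsFiniteMeasure (volume.restrict (Icc 0 T)) := by infer_instance
  have i1 : IntegrableOn (fun s => max (‖u0 s‖ - N) 0) (Icc 0 T) :=
    (hu0.norm.sub (integrable_const _)).pos_part
  have i2 : IntegrableOn (fun s => ‖u s - u0 s‖) (Icc 0 T) := (hu.sub hu0).norm
  have ie : Continuous fun s : ℝ => Real.exp (lam * s) := by fun_prop
  have j3 : IntervalIntegrable (fun s => Real.exp (lam * t) *
      (max (‖u0 s‖ - N) 0 + ‖u s - u0 s‖)) volume 0 t :=
    ((ii_of ht i1).add (ii_of ht i2)).const_mul _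
  have j4 : IntervalIntegrable (fun s => (1 + (N:ℝ)) * Real.exp (lam * s)) volume 0 t :=
    (ie.const_mul _).intervalIntegrable _ _
  have j0 : IntervalIntegrable (fun s => (1 + ‖u s‖) * Real.exp (lam * s)) volume 0 t :=
    IntervalIntegrable.mul_continuousOn
      (intervalIntegrable_const.add (ii_of ht hu.norm)) ie.continuousOn
  have key : ∫ s in (0:ℝ)..t, (1 + ‖u s‖) * Real.exp (lam * s) ≤
      ∫ s in (0:ℝ)..t, ((1 + (N:ℝ)) * Real.exp (lam * s) + Real.exp (lam * t) *
      (max (‖u0 s‖ - N) 0 + ‖u s - u0 s‖)) := by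
    apply intervalIntegral.integral_mono_on ht.1 j0 (j4.add j3)
    intro s hs
    have h1 : ‖u s‖ ≤ ‖u0 s‖ + ‖u s - u0 s‖ := by
      have := norm_add_le (u0 s) (u s - u0 s); simpa using this
    have h2 := le_max_left (‖u0 s‖ - N) 0
    have h3 := le_max_right (‖u0 s‖ - N) 0
    have h4 : Real.exp (lam * s) ≤ Real.exp (lam * t) := by
      apply Real.exp_le_exp.2; exact mul_le_mul_of_nonneg_left hs.2 hlam0.le
    have h5 := Real.exp_pos (lam * s)
    calc (1 + ‖u s‖) * Real.exp (lam * s)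
        ≤ (1 + N + (max (‖u0 s‖ - N) 0 + ‖u s - u0 s‖)) * Real.exp (lam * s) := by
          exact mul_le_mul_of_nonneg_right (by linarith) h5.le
      _ = (1 + N) * Real.exp (lam * s) + Real.exp (lam * s) * (max (‖u0 s‖ - N) 0 + ‖u s - u0 s‖) := by
          ring
      _ ≤ _ := by gcongr
  rw [intervalIntegral.integral_add j4 j3, intervalIntegral.integral_const_mul,
    intervalIntegral.integral_const_mul, intervalIntegral.integral_add (ii_of ht i1) (ii_of ht i2),
    intervalIntegral.integral_comp_mul_left (fun x => Real.exp x) hlam0.ne', integral_exp] at key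
  have k1 := integral_sub_le ht i1 (fun s => le_max_right _ _)
  have k2 := integral_sub_le ht i2 (fun s => norm_nonneg _)
  have h5 := Real.exp_pos (lam * t)
  refine key.trans ?_
  simp only [mul_zero, Real.exp_zero, smul_eq_mul]
  have e1 : (1 + (N:ℝ)) * (lam⁻¹ * (Real.exp (lam * t) - 1)) = (Real.exp (lam * t) - 1) * (1 / (4 * L)) := by
    have : (1 + (N:ℝ)) ≠ 0 := by positivity
    rw [hlam]; field_simp
  rw [e1]
  have e2 : Real.exp (lam * t) * ((∫ s in (0:ℝ)..t, max (‖u0 s‖ - N) 0) + ∫ s in (0:ℝ)..t, ‖u s - u0 s‖)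
      ≤ Real.exp (lam * t) * (1 / (8 * L) + 1 / (8 * L)) := by
    gcongr <;> linarith
  have e3 : (Real.exp (lam * t) - 1) * (1 / (4 * L)) ≤ Real.exp (lam * t) * (1 / (4 * L)) := by
    gcongr; linarith
  calc _ ≤ _ := add_le_add e3 e2
    _ = _ := by field_simp; ring

lemma exists_traj {E F : Type*} [NormedAddCommGroup E] [NormedSpace ℝ E] [CompleteSpace E]
    [NormedAddCommGroup F] {T : ℝ} (hT : 0 < T) (x : E) (V : F → E → E)
    (hVc : Continuous (fun q : F × E => V q.1 q.2)) {L M : ℝ} (hL : 0 < L) (hM : 0 < M)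
    (hV1 : ∀ v y z, ‖V v y - V v z‖ ≤ L * (1 + ‖v‖) * ‖y - z‖)
    (hV2 : ∀ v w y, ‖V v y - V w y‖ ≤ M * ‖v - w‖)
    (hV3 : ∀ v y, ‖V v y‖ ≤ M * (1 + ‖v‖))
    {u0 : ℝ → F} (hu0 : IntegrableOn u0 (Icc 0 T)) {γ0 : ℝ → E}
    (hγ0 : ContinuousOn γ0 (Icc 0 T))
    (hγ0' : ∀ t ∈ Icc (0:ℝ) T, γ0 t = x + ∫ s in (0:ℝ)..t, V (u0 s) (γ0 s)) :
    ∃ ε > 0, ∀ u : ℝ → F, IntegrableOn u (Icc 0 T) → ∫ s in Icc 0 T, ‖u s - u0 s‖ < ε →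
      ∃ γ : ℝ → E, ContinuousOn γ (Icc 0 T) ∧
        (∀ t ∈ Icc (0:ℝ) T, γ t = x + ∫ s in (0:ℝ)..t, V (u s) (γ s)) ∧
        ∀ t ∈ Icc (0:ℝ) T, ‖γ t - γ0 t‖ ≤ 1 := by
  obtain ⟨N, hN⟩ := exists_trunc (μ := volume.restrict (Icc 0 T)) hu0
    (δ := 1 / (8 * L)) (by positivity)
  set lam := 4 * L * (1 + (N:ℝ)) with hlam
  have hlam0 : 0 < lam := by positivity
  refine ⟨min (1 / (8 * L)) (1 / (2 * M * Real.exp (lam * T))), by positivity, ?_⟩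
  intro u hu hε
  have hε1 := hε.trans_le (min_le_left _ _)
  have hε2 := hε.trans_le (min_le_right _ _)
  -- integrability
  have hint : ∀ (w : ℝ → F), IntegrableOn w (Icc 0 T) → ∀ γ : ℝ → E, ContinuousOn γ (Icc 0 T) →
      IntegrableOn (fun s => V (w s) (γ s)) (Icc 0 T) := by
    intro w hw γ hγ
    have : IntegrableOn (fun s => M * (1 + ‖w s‖)) (Icc 0 T) :=
      ((integrable_const (1:ℝ)).add hw.norm).const_mul M
    refine Integrable.mono' this ?_ (Filter.Eventually.of_forall fun s => hV3 _ _)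
    exact hVc.comp_aestronglyMeasurable
      (hw.1.prodMk (hγ.aestronglyMeasurable_of_isCompact isCompact_Icc measurableSet_Icc))
  let G : C(Icc (0:ℝ) T, E) → ℝ → E := fun η s => Real.exp (lam * s) • η (projIcc 0 T hT.le s)
  have hG : ∀ η, Continuous (G η) := by
    intro η
    have := η.continuous.comp (continuous_projIcc (h := hT.le))
    exact (by fun_prop : Continuous fun s : ℝ => Real.exp (lam * s)).smul this
  have hcont : ∀ η, Continuous (fun t : Icc (0:ℝ) T => Real.exp (-(lam * t)) •
      (x + ∫ s in (0:ℝ)..t, V (u s) (G η s))) := by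
    intro η
    have h1 := intervalIntegral.continuousOn_primitive_interval (a := 0) (b := T) (μ := volume)
      (f := fun s => V (u s) (G η s)) (by
        rw [uIcc_of_le hT.le]; exact hint u hu _ (hG η).continuousOn)
    rw [uIcc_of_le hT.le, continuousOn_iff_continuous_domRestrict] at h1
    refine Continuous.smul (by fun_prop) (continuous_const.add h1)
  let Ψ : C(Icc (0:ℝ) T, E) → C(Icc (0:ℝ) T, E) := fun η => ⟨_, hcont η⟩
  have hΨ : ∀ η t, Ψ η t = Real.exp (-(lam * t)) •
      (x + ∫ s in (0:ℝ)..t, V (u s) (G η s)) := fun _ _ => rfl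
  have hcontr : ContractingWith (1/2) Ψ := by
    refine ⟨by rw [← NNReal.coe_lt_coe]; norm_num, LipschitzWith.of_dist_le_mul fun η ζ => ?_⟩
    rw [ContinuousMap.dist_le (by positivity)]
    intro t
    rw [hΨ, hΨ, dist_eq_norm, ← smul_sub, add_sub_add_left_eq_sub,
      ← intervalIntegral.integral_sub (ii_of t.2 (hint u hu _ (hG η).continuousOn))
      (ii_of t.2 (hint u hu _ (hG ζ).continuousOn)), norm_smul, Real.norm_of_nonneg (Real.exp_pos _).le]
    have h1 : ‖∫ s in (0:ℝ)..t, (V (u s) (G η s) - V (u s) (G ζ s))‖ ≤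
        ∫ s in (0:ℝ)..t, (L * dist η ζ) * ((1 + ‖u s‖) * Real.exp (lam * s)) := by
      apply intervalIntegral.norm_integral_le_of_norm_le t.2.1
      · refine Filter.Eventually.of_forall fun s _ => ?_
        refine (hV1 _ _ _).trans ?_
        have : ‖G η s - G ζ s‖ ≤ Real.exp (lam * s) * dist η ζ := by
          simp only [G]
          rw [← smul_sub, norm_smul, Real.norm_of_nonneg (Real.exp_pos _).le, ← dist_eq_norm]
          gcongr
          exact ContinuousMap.dist_apply_le_dist _
        calc _ ≤ L * (1 + ‖u s‖) * (Real.exp (lam * s) * dist η ζ) := by gcongr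
          _ = _ := by ring
      · refine IntervalIntegrable.const_mul ?_ _
        exact IntervalIntegrable.mul_continuousOn
          (intervalIntegrable_const.add (ii_of t.2 hu.norm))
          (by fun_prop : Continuous fun s : ℝ => Real.exp (lam * s)).continuousOn
    rw [intervalIntegral.integral_const_mul] at h1
    have h2 := weight_est hu0 hu hL hN hε1 t.2
    rw [← hlam] at h2
    have h3 : Real.exp (-(lam * t)) * Real.exp (lam * t) = 1 := by
      rw [← Real.exp_add]; simp
    calc _ ≤ Real.exp (-(lam * t)) * (L * dist η ζ * (Real.exp (lam * t) / (2 * L))) := by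
          gcongr; exact h1.trans (by gcongr)
      _ = (Real.exp (-(lam * t)) * Real.exp (lam * t)) * (L * dist η ζ / (2 * L)) := by ring
      _ = _ := by rw [h3]; push_cast; field_simp
  have hη0c : Continuous (fun t : Icc (0:ℝ) T => Real.exp (-(lam * t)) • γ0 t) := by
    refine Continuous.smul (by fun_prop) ?_
    exact continuousOn_iff_continuous_domRestrict.1 hγ0
  let η0 : C(Icc (0:ℝ) T, E) := ⟨_, hη0c⟩
  have hGη0 : ∀ s ∈ Icc (0:ℝ) T, G η0 s = γ0 s := by
    intro s hs
    simp only [G, η0, ContinuousMap.coe_mk, projIcc_of_mem hT.le hs]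
    rw [smul_smul, ← Real.exp_add]; simp
  have hd : dist η0 (Ψ η0) ≤ M * ∫ s in Icc 0 T, ‖u s - u0 s‖ := by
    have hnn : 0 ≤ ∫ s in Icc 0 T, ‖u s - u0 s‖ := integral_nonneg fun _ => norm_nonneg _
    rw [ContinuousMap.dist_le (by positivity)]
    intro t
    have hc : ∫ s in (0:ℝ)..t, V (u s) (G η0 s) = ∫ s in (0:ℝ)..t, V (u s) (γ0 s) := by
      apply intervalIntegral.integral_congr
      intro s hs
      rw [uIcc_of_le t.2.1] at hs
      simp only [hGη0 s ⟨hs.1, hs.2.trans t.2.2⟩]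
    have h0 : η0 t = Real.exp (-(lam * t)) • γ0 t := rfl
    rw [hΨ, h0, hc, hγ0' t t.2, dist_comm, dist_eq_norm, ← smul_sub, add_sub_add_left_eq_sub,
      ← intervalIntegral.integral_sub (ii_of t.2 (hint u hu _ hγ0))
      (ii_of t.2 (hint u0 hu0 _ hγ0)), norm_smul, Real.norm_of_nonneg (Real.exp_pos _).le]
    have i2 : IntegrableOn (fun s => ‖u s - u0 s‖) (Icc 0 T) := (hu.sub hu0).norm
    have h1 : ‖∫ s in (0:ℝ)..t, (V (u s) (γ0 s) - V (u0 s) (γ0 s))‖ ≤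
        ∫ s in (0:ℝ)..t, M * ‖u s - u0 s‖ := by
      apply intervalIntegral.norm_integral_le_of_norm_le t.2.1
      · exact Filter.Eventually.of_forall fun s _ => hV2 _ _ _
      · exact (ii_of t.2 i2).const_mul _
    rw [intervalIntegral.integral_const_mul] at h1
    have h2 := integral_sub_le t.2 i2 (fun s => norm_nonneg _)
    have h3 : Real.exp (-(lam * t)) ≤ 1 := by
      rw [Real.exp_le_one_iff]; have := mul_nonneg hlam0.le t.2.1; linarith
    calc _ ≤ 1 * (M * ∫ s in Icc 0 T, ‖u s - u0 s‖) := by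
          gcongr; exact h1.trans (by gcongr)
      _ = _ := one_mul _
  let ηs := ContractingWith.fixedPoint Ψ hcontr
  have hfix : Ψ ηs = ηs := hcontr.fixedPoint_isFixedPt
  have hdist : dist η0 ηs ≤ 2 * (M * ∫ s in Icc 0 T, ‖u s - u0 s‖) := by
    refine (hcontr.dist_fixedPoint_le η0).trans ?_
    push_cast
    have : (1 - 1/2 : ℝ) = 1/2 := by norm_num
    rw [this]; linarith
  refine ⟨G ηs, (hG ηs).continuousOn, ?_, ?_⟩
  · intro t ht
    have h1 := hΨ ηs ⟨t, ht⟩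
    rw [hfix] at h1
    have h2 : G ηs t = Real.exp (lam * t) • ηs ⟨t, ht⟩ := by
      simp only [G, projIcc_of_mem hT.le ht]
    rw [h2, h1, smul_smul, ← Real.exp_add]; simp
  · intro t ht
    rw [← hGη0 t ht]
    simp only [G]
    rw [← smul_sub, norm_smul, Real.norm_of_nonneg (Real.exp_pos _).le, ← dist_eq_norm, dist_comm]
    have h1 : dist (η0 (projIcc 0 T hT.le t)) (ηs (projIcc 0 T hT.le t)) ≤ _ :=
      (ContinuousMap.dist_apply_le_dist _).trans hdist
    have h2 : Real.exp (lam * t) ≤ Real.exp (lam * T) := by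
      apply Real.exp_le_exp.2; exact mul_le_mul_of_nonneg_left ht.2 hlam0.le
    calc _ ≤ Real.exp (lam * T) * (2 * (M * (1 / (2 * M * Real.exp (lam * T))))) := by
          gcongr; exact h1.trans (by gcongr)
      _ = 1 := by field_simp

lemma exists_cutoff {n : ℕ} (R : ℝ) (hR : 0 < R)
    (X : EuclideanSpace ℝ (Fin n) → EuclideanSpace ℝ (Fin n)) (hX : ContDiff ℝ (⊤ : ℕ∞) X) :
    ∃ Y : EuclideanSpace ℝ (Fin n) → EuclideanSpace ℝ (Fin n), ∃ K : ℝ,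
      0 ≤ K ∧ Continuous Y ∧ (∀ y, ‖y‖ ≤ R → Y y = X y) ∧ (∀ y z, ‖Y y - Y z‖ ≤ K * ‖y - z‖) ∧
      ∀ y, ‖Y y‖ ≤ K := by
  let χ : ContDiffBump (0 : EuclideanSpace ℝ (Fin n)) := ⟨R, R + 1, hR, by linarith⟩
  have hs : HasCompactSupport ((χ : EuclideanSpace ℝ (Fin n) → ℝ) • X) :=
    χ.hasCompactSupport.smul_right
  have hc : ContDiff ℝ (⊤ : ℕ∞) ((χ : EuclideanSpace ℝ (Fin n) → ℝ) • X) := χ.contDiff.smul hX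
  obtain ⟨C, hC⟩ := hc.lipschitzWith_of_hasCompactSupport hs (by simp)
  obtain ⟨B, hB⟩ := hs.exists_bound_of_continuous hc.continuous
  refine ⟨_, max C B, le_max_of_le_left C.2, hc.continuous, ?_, ?_, fun y => (hB y).trans (le_max_right _ _)⟩
  · intro y hy
    have : χ y = 1 := χ.one_of_mem_closedBall (by simpa using hy)
    simp [this]
  · intro y z
    have := hC.dist_le_mul y z
    rw [dist_eq_norm, dist_eq_norm] at this
    exact this.trans (by gcongr; exact le_max_left _ _)

/-- the domain of the endpoint map — the set of controls
`u ∈ L^p([0,T],ℝ^d)` whose trajectory starting at `x` exists on all of `[0,T]` —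
is open in `L^p([0,T],ℝ^d)`. -/
theorem stmt6 (n d : ℕ) (p : ℝ) (hp : 1 ≤ p) [Fact (1 ≤ ENNReal.ofReal p)]
    (T : ℝ) (hT : 0 < T) (x : EuclideanSpace ℝ (Fin n))
    (X0 : EuclideanSpace ℝ (Fin n) → EuclideanSpace ℝ (Fin n))
    (X : Fin d → EuclideanSpace ℝ (Fin n) → EuclideanSpace ℝ (Fin n))
    (hX0smooth : ContDiff ℝ (⊤ : ℕ∞) X0)
    (hXsmooth : ∀ i, ContDiff ℝ (⊤ : ℕ∞) (X i)) :
    IsOpen {u : Lp (EuclideanSpace ℝ (Fin d)) (ENNReal.ofReal p)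
        (volume.restrict (Set.Icc (0:ℝ) T)) |
      ∃ γ : ℝ → EuclideanSpace ℝ (Fin n), IsTrajectory X0 X x T (⇑u) γ} := by
  rw [Metric.isOpen_iff]
  rintro u0 ⟨γ0, hγ0, hγ0'⟩
  obtain ⟨R0, hR0⟩ := isCompact_Icc.exists_bound_of_continuousOn hγ0
  have hR0p : 0 ≤ R0 := (norm_nonneg _).trans (hR0 0 ⟨le_rfl, hT.le⟩)
  obtain ⟨Y0, K0, hK0, hY0c, hY0X, hY0L, hY0B⟩ := exists_cutoff (R0 + 1) (by linarith) X0 hX0smooth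
  choose Y K hK hYc hYX hYL hYB using fun i => exists_cutoff (R0 + 1) (by linarith) (X i) (hXsmooth i)
  let V : EuclideanSpace ℝ (Fin d) → EuclideanSpace ℝ (Fin n) → EuclideanSpace ℝ (Fin n) :=
    fun v y => Y0 y + ∑ i, v i • Y i y
  let A : ℝ := K0 + ∑ i, K i + 1
  have hS : 0 ≤ ∑ i, K i := Finset.sum_nonneg fun i _ => hK i
  have hA : 0 < A := by positivity
  have hsum : ∀ (v : EuclideanSpace ℝ (Fin d)) (z : Fin d → EuclideanSpace ℝ (Fin n)) (c : ℝ),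
      (∀ i, ‖z i‖ ≤ K i * c) → ‖∑ i, v i • z i‖ ≤ (∑ i, K i) * (‖v‖ * c) := by
    intro v z c hz
    rw [Finset.sum_mul]
    refine norm_sum_le_of_le _ fun i _ => ?_
    rw [norm_smul]
    calc _ ≤ ‖v‖ * (K i * c) := by
          gcongr
          · exact PiLp.norm_apply_le v i
          · exact hz i
      _ = _ := by ring
  have hVeq : ∀ v y, ‖y‖ ≤ R0 + 1 → V v y = X0 y + ∑ i, v i • X i y := by
    intro v y hy
    simp only [V, hY0X y hy, fun i => hYX i y hy]
  have hint : ∀ w : Lp (EuclideanSpace ℝ (Fin d)) (ENNReal.ofReal p)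
        (volume.restrict (Set.Icc (0:ℝ) T)), IntegrableOn (⇑w) (Icc 0 T) := by
    intro w
    exact (Lp.memLp w).integrable Fact.out
  obtain ⟨ε, hε, H⟩ := exists_traj hT x V (L := A) (M := A) (u0 := u0) (γ0 := γ0)
    (by
      refine (hY0c.comp continuous_snd).add (continuous_finsetSum _ fun i _ => ?_)
      have h1 : Continuous fun q : EuclideanSpace ℝ (Fin d) × EuclideanSpace ℝ (Fin n) =>
          q.1 i := by fun_prop
      exact h1.smul ((hYc i).comp continuous_snd)) hA hA
    (by
      intro v y z
      have e : V v y - V v z = (Y0 y - Y0 z) + ∑ i, v i • (Y i y - Y i z) := by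
        simp only [V, smul_sub, Finset.sum_sub_distrib]; abel
      rw [e]
      refine (norm_add_le_of_le (hY0L y z) (hsum v _ ‖y - z‖ fun i => hYL i y z)).trans ?_
      have h1 := norm_nonneg v
      have : (K0 + (∑ i, K i) * ‖v‖) ≤ A * (1 + ‖v‖) := by
        simp only [A]; nlinarith [mul_nonneg hK0 h1]
      calc _ = (K0 + (∑ i, K i) * ‖v‖) * ‖y - z‖ := by ring
        _ ≤ _ := by gcongr)
    (by
      intro v w y
      have e : V v y - V w y = ∑ i, (v - w) i • Y i y := by
        simp only [V, PiLp.sub_apply, sub_smul, Finset.sum_sub_distrib]; abel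
      rw [e]
      refine (hsum (v - w) _ 1 fun i => by simpa using hYB i y).trans ?_
      rw [mul_one]
      gcongr
      simp only [A]; linarith)
    (by
      intro v y
      refine (norm_add_le_of_le (hY0B y) (hsum v _ 1 fun i => by simpa using hYB i y)).trans ?_
      have h1 := norm_nonneg v
      simp only [A]; nlinarith [mul_nonneg hK0 h1])
    (hint u0) hγ0
    (by
      intro t ht
      rw [hγ0' t ht]
      congr 1
      apply intervalIntegral.integral_congr
      intro s hs
      rw [uIcc_of_le ht.1] at hs
      simp only
      rw [hVeq]
      have := hR0 s ⟨hs.1, hs.2.trans ht.2⟩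
      linarith)
  let C : ℝ := (volume.restrict (Icc (0:ℝ) T) univ ^ (1 / (1:ENNReal).toReal - 1 / (ENNReal.ofReal p).toReal)).toReal
  have hfin : volume.restrict (Icc (0:ℝ) T) univ ^ (1 / (1:ENNReal).toReal - 1 / (ENNReal.ofReal p).toReal) ≠ ⊤ := by
    apply ENNReal.rpow_ne_top_of_nonneg
    · rw [ENNReal.toReal_ofReal (by linarith)]
      simp only [ENNReal.toReal_one, div_one, one_div, sub_nonneg]
      exact inv_le_one_of_one_le₀ hp
    · exact measure_ne_top _ _
  have hC : 0 ≤ C := ENNReal.toReal_nonneg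
  have hL1 : ∀ u : Lp (EuclideanSpace ℝ (Fin d)) (ENNReal.ofReal p)
        (volume.restrict (Set.Icc (0:ℝ) T)), ∫ s in Icc 0 T, ‖u s - u0 s‖ ≤ dist u u0 * C := by
    intro u
    have h1 : ∫ s in Icc 0 T, ‖u s - u0 s‖ = ∫ s in Icc 0 T, ‖(u - u0 : Lp _ _ _) s‖ := by
      apply integral_congr_ae
      filter_upwards [Lp.coeFn_sub u u0] with s hs
      rw [hs]; rfl
    rw [h1, integral_norm_eq_lintegral_enorm (Lp.aestronglyMeasurable _),
      ← eLpNorm_one_eq_lintegral_enorm, dist_eq_norm, Lp.norm_def, ← ENNReal.toReal_mul]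
    apply ENNReal.toReal_mono (ENNReal.mul_ne_top (Lp.eLpNorm_ne_top _) hfin)
    exact eLpNorm_le_eLpNorm_mul_rpow_measure_univ Fact.out (Lp.aestronglyMeasurable _)
  refine ⟨ε / (C + 1), by positivity, ?_⟩
  intro u hu
  rw [Metric.mem_ball, lt_div_iff₀ (by positivity)] at hu
  obtain ⟨γ, hγc, hγ, hγd⟩ := H u (hint u) (by
    have := hL1 u
    have := dist_nonneg (x := u) (y := u0)
    nlinarith)
  refine ⟨γ, hγc, fun t ht => ?_⟩
  rw [hγ t ht]
  congr 1
  apply intervalIntegral.integral_congr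
  intro s hs
  rw [uIcc_of_le ht.1] at hs
  have hs' : s ∈ Icc 0 T := ⟨hs.1, hs.2.trans ht.2⟩
  simp only
  rw [hVeq]
  have h1 := hR0 s hs'
  have h2 := hγd s hs'
  have h3 := norm_add_le (γ s - γ0 s) (γ0 s)
  rw [sub_add_cancel] at h3
  linarith
end
end

section
/- Fix n, d ∈ ℕ, 1 < p < ∞, T > 0, x ∈ ℝ^n, and smooth vector fields X_0, X_1, …, X_d : ℝ^n → ℝ^n that are bounded and have bounded first and second derivatives. Let F : L^p([0,T], ℝ^d) → ℝ^n be the endpoint map F(u) = γ_u(T), where γ_u is the trajectory of u starting at x. Fix u ∈ L^p([0,T], ℝ^d), set A_u(s) = DX_0(γ_u(s)) + Σ_{i=1}^d u_i(s)·DX_i(γ_u(s)) (an n×n-matrix-valued integrable function, where DX_i denotes the Jacobian matrix), and let N : [0,T] → ℝ^{n×n} be the unique continuous matrix-valued function satisfying N(t) = I + ∫_t^T N(s)A_u(s) ds for all t ∈ [0,T]. Then F is Fréchet differentiable at u and its differential is the bounded linear map d_uF(v) = ∫_0^T N(s)·( Σ_{i=1}^d v_i(s) X_i(γ_u(s)) )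 ds for v = (v_1, …, v_d) ∈ L^p([0,T], ℝ^d). -/
open MeasureTheory Set

noncomputable section

theorem ii_ {T : ℝ} (hT : 0 ≤ T) {X : Type*} [NormedAddCommGroup X] {f : ℝ → X}
    (hf : IntegrableOn f (Icc 0 T)) : IntervalIntegrable f volume 0 T := by
  rw [intervalIntegrable_iff_integrableOn_Icc_of_le hT]
  exact hf

theorem gron_aux {T a : ℝ} {k φ : ℝ → ℝ} (hk0 : ∀ s, 0 ≤ k s)
    (hk : IntegrableOn k (Icc 0 T)) (hφ : ContinuousOn φ (Icc 0 T)) (hφ0 : ∀ s, 0 ≤ φ s) (ha : 0 ≤ a)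
    (h : ∀ t ∈ Icc (0:ℝ) T, φ t ≤ a + ∫ s in (0:ℝ)..t, k s * φ s) (m : ℕ) :
    ∀ t ∈ Icc (0:ℝ) T, (∫ s in (0:ℝ)..t, k s) ≤ m / 2 →
      a + ∫ s in (0:ℝ)..t, k s * φ s ≤ 2 ^ m * a := by
  have hkφ : IntegrableOn (fun s => k s * φ s) (Icc 0 T) := hk.mul_continuousOn hφ isCompact_Icc
  have ii : ∀ {f : ℝ → ℝ}, IntegrableOn f (Icc 0 T) → ∀ {s t : ℝ}, 0 ≤ s → s ≤ t → t ≤ T →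
      IntervalIntegrable f volume s t := by
    intro f hf s t h0 h1 h2
    rw [intervalIntegrable_iff_integrableOn_Icc_of_le h1]
    exact hf.mono_set (Icc_subset_Icc h0 h2)
  have key : ∀ s t, 0 ≤ s → s ≤ t → t ≤ T →
      (a + ∫ s in (0:ℝ)..t, k s * φ s) - (a + ∫ s in (0:ℝ)..s, k s * φ s) ≤
      ((∫ s in (0:ℝ)..t, k s) - ∫ s in (0:ℝ)..s, k s) * (a + ∫ s in (0:ℝ)..t, k s * φ s) := by
    intro s t h0 h1 h2
    rw [add_sub_add_left_eq_sub, intervalIntegral.integral_interval_sub_left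
      (ii hkφ le_rfl (h0.trans h1) h2) (ii hkφ le_rfl h0 (h1.trans h2)),
      intervalIntegral.integral_interval_sub_left
      (ii hk le_rfl (h0.trans h1) h2) (ii hk le_rfl h0 (h1.trans h2)),
      ← intervalIntegral.integral_mul_const]
    apply intervalIntegral.integral_mono_on h1 (ii hkφ h0 h1 h2) ((ii hk h0 h1 h2).mul_const _)
    intro r hr
    apply mul_le_mul_of_nonneg_left _ (hk0 r)
    refine (h r ⟨h0.trans hr.1, hr.2.trans h2⟩).trans ?_
    gcongr
    apply intervalIntegral.integral_mono_interval le_rfl (h0.trans hr.1) hr.2 _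
      (ii hkφ le_rfl (h0.trans h1) h2)
    exact Filter.Eventually.of_forall fun x => mul_nonneg (hk0 x) (hφ0 x)
  have H0 : ∀ t ∈ Icc (0:ℝ) T, 0 ≤ (a + ∫ s in (0:ℝ)..t, k s * φ s) := fun t ht =>
    (hφ0 t).trans (h t ht)
  have K0 : ∀ t ∈ Icc (0:ℝ) T, 0 ≤ (∫ s in (0:ℝ)..t, k s) := fun t ht =>
    intervalIntegral.integral_nonneg ht.1 fun s _ => hk0 s
  induction m with
  | zero =>
    intro t ht hK
    have := key 0 t le_rfl ht.1 ht.2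
    have hK' : (∫ s in (0:ℝ)..t, k s) = 0 := le_antisymm (by simpa using hK) (K0 t ht)
    rw [hK'] at this
    simp at this ⊢
    linarith
  | succ m ih =>
    intro t ht hK
    by_cases hc : (∫ s in (0:ℝ)..t, k s) ≤ m / 2
    · refine (ih t ht hc).trans ?_
      rw [pow_succ]
      nlinarith [pow_pos (two_pos : (0:ℝ) < 2) m, mul_nonneg (pow_pos (two_pos : (0:ℝ) < 2) m).le ha]
    · push Not at hc
      have hcont : ContinuousOn (fun t => ∫ s in (0:ℝ)..t, k s) (Icc 0 t) :=
        intervalIntegral.continuousOn_primitive_interval' (b₁ := 0) (b₂ := t)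
          (ii hk le_rfl ht.1 ht.2) (by simp) |>.mono (by rw [uIcc_of_le ht.1])
      obtain ⟨s, hs, hs'⟩ := intermediate_value_Icc ht.1 hcont
        (show (m/2 : ℝ) ∈ _ from ⟨by simp; positivity, hc.le⟩)
      simp only at hs'
      have h1 := key s t hs.1 hs.2 ht.2
      have h2 := ih s ⟨hs.1, hs.2.trans ht.2⟩ hs'.le
      have h3 := H0 t ht
      push_cast at hK
      have h4 : ((∫ s in (0:ℝ)..t, k s) - ∫ s in (0:ℝ)..s, k s) ≤ 1/2 := by rw [hs']; linarith
      have h5 := mul_le_mul_of_nonneg_right h4 h3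
      rw [pow_succ]
      linarith

theorem gron {T : ℝ} {k : ℝ → ℝ} (hk0 : ∀ s, 0 ≤ k s)
    (hk : IntegrableOn k (Icc 0 T)) : ∃ M : ℝ, 0 ≤ M ∧ ∀ (a : ℝ) (φ : ℝ → ℝ), 0 ≤ a →
    ContinuousOn φ (Icc 0 T) → (∀ s, 0 ≤ φ s) → 
    (∀ t ∈ Icc (0:ℝ) T, φ t ≤ a + ∫ s in (0:ℝ)..t, k s * φ s) → ∀ t ∈ Icc (0:ℝ) T, φ t ≤ M * a := by
  obtain ⟨m, hm⟩ := exists_nat_ge (2 * ∫ s in (0:ℝ)..T, k s)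
  refine ⟨2 ^ m, by positivity, fun a φ ha hφ hφ0 h t ht => (h t ht).trans ?_⟩
  apply gron_aux hk0 hk hφ hφ0 ha h m t ht
  have : (∫ s in (0:ℝ)..t, k s) ≤ ∫ s in (0:ℝ)..T, k s := by
    apply intervalIntegral.integral_mono_interval le_rfl ht.1 ht.2
    · exact Filter.Eventually.of_forall hk0
    · rw [intervalIntegrable_iff_integrableOn_Icc_of_le (ht.1.trans ht.2)]
      exact hk
  linarith

theorem fub {E : Type*} [NormedAddCommGroup E] [NormedSpace ℝ E] [CompleteSpace E] {T : ℝ} (hT : 0 ≤ T)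
    {B : ℝ → E →L[ℝ] E} {g : ℝ → E} (hB : IntegrableOn B (Icc 0 T)) (hg : IntegrableOn g (Icc 0 T)) :
    ∫ s in (0:ℝ)..T, (∫ t in s..T, B t) (g s) = ∫ t in (0:ℝ)..T, B t (∫ s in (0:ℝ)..t, g s) := by
  rw [intervalIntegral.integral_of_le hT, intervalIntegral.integral_of_le hT]
  have hB' : IntegrableOn B (Ioc 0 T) := hB.mono_set Ioc_subset_Icc_self
  have hg' : IntegrableOn g (Ioc 0 T) := hg.mono_set Ioc_subset_Icc_self
  have e1 : ∀ s ∈ Ioc 0 T, (∫ t in s..T, B t) (g s) =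
      ∫ t in Ioc 0 T, {z : ℝ × ℝ | z.1 < z.2}.indicator (fun z => B z.2 (g z.1)) (s, t) := by
    intro s hs
    rw [intervalIntegral.integral_of_le hs.2, ContinuousLinearMap.integral_apply
      (hB'.mono_set (Ioc_subset_Ioc_left hs.1.le))]
    have : Ioc s T = Ioc 0 T ∩ Ioi s := by
      ext r; simp only [mem_Ioc, mem_inter_iff, mem_Ioi]; grind
    rw [this, ← setIntegral_indicator measurableSet_Ioi]
    rfl
  have e2 : ∀ t ∈ Ioc 0 T, B t (∫ s in (0:ℝ)..t, g s) =
      ∫ s in Ioc 0 T, {z : ℝ × ℝ | z.1 < z.2}.indicator (fun z => B z.2 (g z.1)) (s, t) := by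
    intro t ht
    rw [intervalIntegral.integral_of_le ht.1.le, ← ContinuousLinearMap.integral_comp_comm _
      (hg'.mono_set (Ioc_subset_Ioc_right ht.2)), integral_Ioc_eq_integral_Ioo]
    have : Ioo 0 t = Ioc 0 T ∩ Iio t := by
      ext r; simp only [mem_Ioc, mem_inter_iff, mem_Iio, mem_Ioo]; grind
    rw [this, ← setIntegral_indicator measurableSet_Iio]
    rfl
  rw [setIntegral_congr_fun measurableSet_Ioc e1, setIntegral_congr_fun measurableSet_Ioc e2]
  refine integral_integral_swap (f := fun s t => {z : ℝ × ℝ | z.1 < z.2}.indicator (fun z => B z.2 (g z.1)) (s, t)) ?_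
  refine Integrable.indicator (f := fun z : ℝ × ℝ => B z.2 (g z.1)) ?_ (measurableSet_lt measurable_fst measurable_snd)
  refine Integrable.op_fst_snd (op := fun (x : E) (L : E →L[ℝ] E) => L x) (f := g) (g := B) ?_ ⟨1, ?_⟩ hg' hB'
  · exact isBoundedBilinearMap_apply.continuous.comp continuous_swap
  · intro x L
    simpa [mul_comm] using L.le_opNorm x

theorem bil_int {E F G : Type*} [NormedAddCommGroup E] [NormedSpace ℝ E]
    [NormedAddCommGroup F] [NormedSpace ℝ F] [NormedAddCommGroup G] [NormedSpace ℝ G]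
    (L : E →L[ℝ] F →L[ℝ] G) {T : ℝ} {f : ℝ → E} {g : ℝ → F} (hf : ContinuousOn f (Icc 0 T))
    (hg : IntegrableOn g (Icc 0 T)) : IntegrableOn (fun s => L (f s) (g s)) (Icc 0 T) := by
  obtain ⟨C, hC⟩ := isCompact_Icc.exists_bound_of_continuousOn hf
  refine Integrable.mono' (g := fun s => ‖L‖ * C * ‖g s‖) (hg.norm.const_mul _) ?_ ?_
  · exact L.aestronglyMeasurable_comp₂ (hf.aestronglyMeasurable measurableSet_Icc) hg.1
  · filter_upwards [ae_restrict_mem measurableSet_Icc] with s hs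
    refine (L.le_opNorm₂ _ _).trans ?_
    gcongr
    exact hC s hs

theorem core {E : Type*} [NormedAddCommGroup E] [NormedSpace ℝ E] [CompleteSpace E] {T : ℝ} (hT : 0 ≤ T)
    {N A : ℝ → E →L[ℝ] E} {δ g q : ℝ → E} {r : ℝ → ℝ} {CN : ℝ}
    (hNc : ContinuousOn N (Icc 0 T)) (hA : IntegrableOn A (Icc 0 T))
    (hN : ∀ t ∈ Icc 0 T, N t = ContinuousLinearMap.id ℝ E + ∫ s in t..T, (N s).comp (A s))
    (hCN : ∀ t ∈ Icc 0 T, ‖N t‖ ≤ CN)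
    (hg : IntegrableOn g (Icc 0 T)) (hq : IntegrableOn q (Icc 0 T))
    (hδc : ContinuousOn δ (Icc 0 T))
    (hr : IntegrableOn r (Icc 0 T))
    (hδ : ∀ t ∈ Icc 0 T, δ t = ∫ s in (0:ℝ)..t, g s)
    (hb : ∀ s ∈ Icc 0 T, ‖g s - A s (δ s) - q s‖ ≤ r s) :
    ‖δ T - ∫ s in (0:ℝ)..T, N s (q s)‖ ≤ CN * ∫ s in (0:ℝ)..T, r s := by
  have hB : IntegrableOn (fun s => (N s).comp (A s)) (Icc 0 T) :=
    bil_int (ContinuousLinearMap.compL ℝ E E E) hNc hA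
  have happ : ∀ {f : ℝ → E}, IntegrableOn f (Icc 0 T) → IntegrableOn (fun s => N s (f s)) (Icc 0 T) :=
    fun hf => bil_int (ContinuousLinearMap.id ℝ (E →L[ℝ] E)) hNc hf
  have hAδ : IntegrableOn (fun s => A s (δ s)) (Icc 0 T) :=
    bil_int (ContinuousLinearMap.id ℝ (E →L[ℝ] E)).flip hδc hA
  have hBg : IntegrableOn (fun s => (∫ t in s..T, (N t).comp (A t)) (g s)) (Icc 0 T) := by
    refine ((happ hg).sub hg).congr_fun ?_ measurableSet_Icc
    intro s hs
    simp [hN s hs]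
  have e : ∫ s in (0:ℝ)..T, N s (g s) = δ T + ∫ s in (0:ℝ)..T, N s (A s (δ s)) := by
    have : ∫ s in (0:ℝ)..T, N s (g s) = ∫ s in (0:ℝ)..T, (g s + (∫ t in s..T, (N t).comp (A t)) (g s)) := by
      apply intervalIntegral.integral_congr
      intro s hs
      rw [uIcc_of_le hT] at hs
      simp [hN s hs]
    rw [this, intervalIntegral.integral_add (ii_ hT hg) (ii_ hT hBg), fub hT hB hg, hδ T ⟨hT, le_rfl⟩]
    congr 1
    apply intervalIntegral.integral_congr
    intro s hs
    rw [uIcc_of_le hT] at hs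
    simp [hδ s hs]
  have e2 : δ T - ∫ s in (0:ℝ)..T, N s (q s) = ∫ s in (0:ℝ)..T, N s (g s - A s (δ s) - q s) := by
    simp only [map_sub]
    rw [intervalIntegral.integral_sub ((ii_ hT (happ hg)).sub (ii_ hT (happ hAδ))) (ii_ hT (happ hq)),
      intervalIntegral.integral_sub (ii_ hT (happ hg)) (ii_ hT (happ hAδ)), e]
    abel
  rw [e2, ← intervalIntegral.integral_const_mul]
  apply intervalIntegral.norm_integral_le_of_norm_le hT _ ((ii_ hT hr).const_mul _)
  refine Filter.Eventually.of_forall fun s hs => ?_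
  have hs' := Ioc_subset_Icc_self hs
  refine ((N s).le_opNorm _).trans ?_
  exact mul_le_mul (hCN s hs') (hb s hs') (norm_nonneg _) ((norm_nonneg _).trans (hCN s hs'))

theorem lip_of {E : Type*} [NormedAddCommGroup E] [NormedSpace ℝ E] {G : Type*} [NormedAddCommGroup G]
    [NormedSpace ℝ G] {f : E → G} {C : ℝ} (hf : Differentiable ℝ f)
    (hC : ∀ y, ‖fderiv ℝ f y‖ ≤ C) (x y : E) : ‖f y - f x‖ ≤ C * ‖y - x‖ :=
  convex_univ.norm_image_sub_le_of_norm_fderiv_le (fun z _ => hf z) (fun z _ => hC z)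
    (mem_univ x) (mem_univ y)

theorem taylor_of {E : Type*} [NormedAddCommGroup E] [NormedSpace ℝ E] {f : E → E} {C : ℝ}
    (hC0 : 0 ≤ C) (hf : ContDiff ℝ (⊤ : ℕ∞) f)
    (hC : ∀ y, ‖fderiv ℝ (fderiv ℝ f) y‖ ≤ C) (x y : E) :
    ‖f y - f x - fderiv ℝ f x (y - x)‖ ≤ C * ‖y - x‖ ^ 2 := by
  have hd : Differentiable ℝ f := hf.differentiable (by simp)
  have hd2 : Differentiable ℝ (fderiv ℝ f) :=
    (hf.fderiv_right (m := (⊤ : ℕ∞)) (by simp)).differentiable (by simp)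
  have := (convex_closedBall x ‖y - x‖).norm_image_sub_le_of_norm_fderiv_le'
    (f := f) (φ := fderiv ℝ f x) (C := C * ‖y - x‖) (x := x) (y := y) (𝕜 := ℝ)
    (fun z _ => hd z) (fun z hz => (lip_of hd2 hC x z).trans (by
      gcongr; simpa [dist_eq_norm] using hz)) (by simp) (by simp [dist_eq_norm])
  rw [pow_two, ← mul_assoc]; exact this

theorem traj_est {n d : ℕ} {T : ℝ} (hT : 0 ≤ T) {x : EuclideanSpace ℝ (Fin n)}
    {X0 : EuclideanSpace ℝ (Fin n) → EuclideanSpace ℝ (Fin n)}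
    {X : Fin d → EuclideanSpace ℝ (Fin n) → EuclideanSpace ℝ (Fin n)}
    (hX0smooth : ContDiff ℝ (⊤ : ℕ∞) X0) (hXsmooth : ∀ i, ContDiff ℝ (⊤ : ℕ∞) (X i))
    {C : ℝ} (hC0 : 0 ≤ C)
    (hXbdd : ∀ i y, ‖X i y‖ ≤ C)
    (hX0der : ∀ y, ‖fderiv ℝ X0 y‖ ≤ C)
    (hXder : ∀ i y, ‖fderiv ℝ (X i) y‖ ≤ C)
    (hX0der2 : ∀ y, ‖fderiv ℝ (fderiv ℝ X0) y‖ ≤ C)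
    (hXder2 : ∀ i y, ‖fderiv ℝ (fderiv ℝ (X i)) y‖ ≤ C)
    {u : ℝ → EuclideanSpace ℝ (Fin d)} (hu : ∀ i, IntegrableOn (fun s => u s i) (Icc 0 T))
    {γ : ℝ → EuclideanSpace ℝ (Fin n)}
    (hγ : IsTrajectory X0 X x T u γ)
    {N : ℝ → (EuclideanSpace ℝ (Fin n) →L[ℝ] EuclideanSpace ℝ (Fin n))}
    (hNcont : ContinuousOn N (Set.Icc 0 T))
    (hN : ∀ t ∈ Set.Icc (0:ℝ) T,
      N t = ContinuousLinearMap.id ℝ (EuclideanSpace ℝ (Fin n)) +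
        ∫ s in t..T, (N s).comp
          (fderiv ℝ X0 (γ s) + ∑ i, u s i • fderiv ℝ (X i) (γ s))) :
    ∃ K : ℝ, 0 ≤ K ∧ ∀ (w : ℝ → EuclideanSpace ℝ (Fin d)) (η : ℝ → EuclideanSpace ℝ (Fin n)),
      (∀ i, IntegrableOn (fun s => w s i) (Icc 0 T)) → IsTrajectory X0 X x T w η →
      ‖η T - γ T - ∫ s in (0:ℝ)..T, N s (∑ i, (w s i - u s i) • X i (γ s))‖ ≤
        K * (∫ s in (0:ℝ)..T, ∑ i, |w s i - u s i|) ^ 2 := by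
  have hd0 : Differentiable ℝ X0 := hX0smooth.differentiable (by simp)
  have hd : ∀ i, Differentiable ℝ (X i) := fun i => (hXsmooth i).differentiable (by simp)
  have hdc0 : Continuous (fderiv ℝ X0) := hX0smooth.continuous_fderiv (by simp)
  have hdc : ∀ i, Continuous (fderiv ℝ (X i)) := fun i => (hXsmooth i).continuous_fderiv (by simp)
  have ci : ∀ {X : Type} [NormedAddCommGroup X] {f : ℝ → X}, ContinuousOn f (Icc 0 T) →
      IntegrableOn f (Icc 0 T) := fun hf => hf.integrableOn_Icc
  set k : ℝ → ℝ := fun s => C * (1 + ∑ i, |u s i|) with hk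
  have hk0 : ∀ s, 0 ≤ k s := fun s => mul_nonneg hC0 (by positivity)
  have hki : IntegrableOn k (Icc 0 T) := by
    have h1 : IntegrableOn (fun _ : ℝ => (1:ℝ)) (Icc 0 T) := ci continuousOn_const
    have h2 : IntegrableOn (fun s => ∑ i, |u s i|) (Icc 0 T) :=
      integrable_finsetSum _ fun i _ => (hu i).abs
    exact (Integrable.add h1 h2).const_mul C
  obtain ⟨M, hM0, hM⟩ := gron hk0 hki
  obtain ⟨CN, hCN⟩ := isCompact_Icc.exists_bound_of_continuousOn hNcont
  have hCN0 : 0 ≤ CN := (norm_nonneg _).trans (hCN T ⟨hT, le_rfl⟩)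
  refine ⟨CN * ((M * C) ^ 2 * (∫ s in (0:ℝ)..T, k s) + C * (M * C)), ?_, ?_⟩
  · have : 0 ≤ ∫ s in (0:ℝ)..T, k s := intervalIntegral.integral_nonneg hT fun s _ => hk0 s
    positivity
  intro w η hw hη
  have fi : ∀ {u : ℝ → EuclideanSpace ℝ (Fin d)} {γ : ℝ → EuclideanSpace ℝ (Fin n)},
      (∀ i, IntegrableOn (fun s => u s i) (Icc 0 T)) → ContinuousOn γ (Icc 0 T) →
      IntegrableOn (fun s => X0 (γ s) + ∑ i, u s i • X i (γ s)) (Icc 0 T) := by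
    intro u γ hu hγ
    refine Integrable.add (ci (hd0.continuous.comp_continuousOn hγ)) ?_
    exact integrable_finsetSum _ fun i _ => 
      (hu i).smul_continuousOn ((hd i).continuous.comp_continuousOn hγ) isCompact_Icc
  have hA : IntegrableOn (fun s => fderiv ℝ X0 (γ s) + ∑ i, u s i • fderiv ℝ (X i) (γ s)) (Icc 0 T) := by
    refine Integrable.add (ci (hdc0.comp_continuousOn hγ.1)) ?_
    exact integrable_finsetSum _ fun i _ => 
      (hu i).smul_continuousOn ((hdc i).comp_continuousOn hγ.1) isCompact_Icc
  have hq : IntegrableOn (fun s => ∑ i, (w s i - u s i) • X i (γ s)) (Icc 0 T) :=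
    integrable_finsetSum _ fun i _ => 
      ((hw i).sub (hu i)).smul_continuousOn ((hd i).continuous.comp_continuousOn hγ.1) isCompact_Icc
  set m : ℝ → ℝ := fun s => ∑ i, |w s i - u s i| with hm
  have hm0 : ∀ s, 0 ≤ m s := fun s => by positivity
  have hmi : IntegrableOn m (Icc 0 T) := integrable_finsetSum _ fun i _ => ((hw i).sub (hu i)).abs
  set I := ∫ s in (0:ℝ)..T, m s with hI
  have hI0 : 0 ≤ I := intervalIntegral.integral_nonneg hT fun s _ => hm0 s
  set δ : ℝ → EuclideanSpace ℝ (Fin n) := fun s => η s - γ s with hδ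
  set g : ℝ → EuclideanSpace ℝ (Fin n) := fun s => (X0 (η s) + ∑ i, w s i • X i (η s)) -
    (X0 (γ s) + ∑ i, u s i • X i (γ s)) with hg
  have hgi : IntegrableOn g (Icc 0 T) := (fi hw hη.1).sub (fi hu hγ.1)
  have hδc : ContinuousOn δ (Icc 0 T) := hη.1.sub hγ.1
  have hδe : ∀ t ∈ Icc 0 T, δ t = ∫ s in (0:ℝ)..t, g s := by
    intro t ht
    have hs : Icc 0 t ⊆ Icc 0 T := Icc_subset_Icc_right ht.2
    simp only [hδ, hg]
    rw [intervalIntegral.integral_sub (ii_ ht.1 ((fi hw hη.1).mono_set hs))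
      (ii_ ht.1 ((fi hu hγ.1).mono_set hs)), hη.2 t ht, hγ.2 t ht]
    abel
  have hgb : ∀ s, ‖g s‖ ≤ C * m s + k s * ‖δ s‖ := by
    intro s
    have : g s = (X0 (η s) - X0 (γ s)) + ∑ i, (u s i • (X i (η s) - X i (γ s)) +
        (w s i - u s i) • X i (η s)) := by
      simp only [hg, Finset.sum_add_distrib, smul_sub, sub_smul, Finset.sum_sub_distrib]
      abel
    rw [this]
    calc _ ≤ C * ‖δ s‖ + ∑ i, (|u s i| * (C * ‖δ s‖) + |w s i - u s i| * C) := by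
          refine (norm_add_le _ _).trans (add_le_add (lip_of hd0 hX0der _ _)
            ((norm_sum_le _ _).trans (Finset.sum_le_sum fun i _ => (norm_add_le _ _).trans ?_)))
          rw [norm_smul, norm_smul, Real.norm_eq_abs, Real.norm_eq_abs]
          gcongr
          · exact lip_of (hd i) (hXder i) _ _
          · exact hXbdd i _
      _ = _ := by
          rw [Finset.sum_add_distrib, ← Finset.sum_mul, ← Finset.sum_mul]
          simp only [hk, hm]; ring
  have hδb : ∀ t ∈ Icc 0 T, ‖δ t‖ ≤ M * (C * I) := by
    apply hM (C * I) (fun t => ‖δ t‖) (by positivity) hδc.norm (fun s => norm_nonneg _)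
    intro t ht
    have hs : Icc 0 t ⊆ Icc 0 T := Icc_subset_Icc_right ht.2
    have hkδ : IntegrableOn (fun s => k s * ‖δ s‖) (Icc 0 T) :=
      hki.mul_continuousOn hδc.norm isCompact_Icc
    have h1 : ‖δ t‖ ≤ ∫ s in (0:ℝ)..t, (C * m s + k s * ‖δ s‖) := by
      rw [hδe t ht]
      apply intervalIntegral.norm_integral_le_of_norm_le ht.1 _
        (((ii_ ht.1 (hmi.mono_set hs)).const_mul _).add (ii_ ht.1 (hkδ.mono_set hs)))
      exact Filter.Eventually.of_forall fun s _ => hgb s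
    rw [intervalIntegral.integral_add ((ii_ ht.1 (hmi.mono_set hs)).const_mul _) 
      (ii_ ht.1 (hkδ.mono_set hs)), intervalIntegral.integral_const_mul] at h1
    refine h1.trans ?_
    gcongr
    exact intervalIntegral.integral_mono_interval le_rfl ht.1 ht.2
      (Filter.Eventually.of_forall hm0) (ii_ hT hmi)
  have hr : IntegrableOn (fun s => k s * (M * (C * I)) ^ 2 + C * (M * (C * I)) * m s) (Icc 0 T) :=
    Integrable.add (Integrable.mul_const hki ((M * (C * I)) ^ 2))
      (Integrable.const_mul hmi (C * (M * (C * I))))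
  have := core hT (r := fun s => k s * (M * (C * I)) ^ 2 + C * (M * (C * I)) * m s)
    hNcont hA hN hCN hgi hq hδc hr hδe ?_
  · refine this.trans (le_of_eq ?_)
    rw [intervalIntegral.integral_add ((ii_ hT hki).mul_const _) ((ii_ hT hmi).const_mul _),
      intervalIntegral.integral_mul_const,
      intervalIntegral.integral_const_mul (C * (M * (C * I))) m, ← hI]
    ring
  · intro s hs
    have : g s - (fderiv ℝ X0 (γ s) + ∑ i, u s i • fderiv ℝ (X i) (γ s)) (δ s) -
        ∑ i, (w s i - u s i) • X i (γ s) =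
        (X0 (η s) - X0 (γ s) - fderiv ℝ X0 (γ s) (δ s)) + 
        ∑ i, (u s i • (X i (η s) - X i (γ s) - fderiv ℝ (X i) (γ s) (δ s)) +
        (w s i - u s i) • (X i (η s) - X i (γ s))) := by
      simp only [hg, Finset.sum_add_distrib, smul_sub, sub_smul, Finset.sum_sub_distrib,
        _root_.add_apply, _root_.sum_apply, _root_.smul_apply]
      abel
    rw [this]
    calc _ ≤ C * ‖δ s‖ ^ 2 + ∑ i, (|u s i| * (C * ‖δ s‖ ^ 2) + |w s i - u s i| * (C * ‖δ s‖)) := by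
          refine (norm_add_le _ _).trans (add_le_add (taylor_of hC0 hX0smooth hX0der2 _ _)
            ((norm_sum_le _ _).trans (Finset.sum_le_sum fun i _ => (norm_add_le _ _).trans ?_)))
          rw [norm_smul, norm_smul, Real.norm_eq_abs, Real.norm_eq_abs]
          gcongr
          · exact taylor_of hC0 (hXsmooth i) (hXder2 i) _ _
          · exact lip_of (hd i) (hXder i) _ _
      _ = k s * ‖δ s‖ ^ 2 + C * ‖δ s‖ * m s := by
          rw [Finset.sum_add_distrib, ← Finset.sum_mul, ← Finset.sum_mul]
          simp only [hk, hm]; ring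
      _ ≤ _ := by
          have h1 := hδb s hs
          have := hk0 s
          have := hm0 s
          gcongr

theorem lp_est {d : ℕ} {p : ℝ} [hp : Fact (1 ≤ ENNReal.ofReal p)] {T : ℝ} (hT : 0 ≤ T) :
    ∃ K : ℝ, 0 ≤ K ∧ ∀ v : Lp (EuclideanSpace ℝ (Fin d)) (ENNReal.ofReal p)
        (volume.restrict (Set.Icc (0:ℝ) T)),
      ∫ s in (0:ℝ)..T, ∑ i, |v s i| ≤ K * ‖v‖ := by
  set μ := volume.restrict (Set.Icc (0:ℝ) T) with hμ
  set c : ENNReal := μ univ ^ (1 / (1:ENNReal).toReal - 1 / (ENNReal.ofReal p).toReal) with hc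
  have hctop : c ≠ ⊤ := by
    apply ENNReal.rpow_ne_top_of_nonneg
    · rw [ENNReal.toReal_one, ENNReal.toReal_ofReal_eq_iff.2 (by
        have := hp.1; rw [ENNReal.one_le_ofReal] at this; linarith)]
      have := hp.1; rw [ENNReal.one_le_ofReal] at this
      rw [sub_nonneg, one_div_one]
      exact (div_le_one (by linarith)).2 this
    · exact measure_ne_top _ _
  refine ⟨d * c.toReal, by positivity, fun v => ?_⟩
  have hvi : Integrable v μ := (Lp.memLp v).integrable hp.1
  have h1 : ∫ s in (0:ℝ)..T, ∑ i, |v s i| ≤ ∫ s in (0:ℝ)..T, d * ‖v s‖ := by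
    apply intervalIntegral.integral_mono_on hT
    · exact ii_ hT (integrable_finsetSum _ fun i _ => 
        ((EuclideanSpace.proj (𝕜 := ℝ) i).integrable_comp hvi).abs)
    · exact (ii_ hT hvi.norm).const_mul _
    · intro s _
      refine (Finset.sum_le_sum fun i _ => PiLp.norm_apply_le (v s) i).trans ?_
      simp
  refine h1.trans ?_
  rw [intervalIntegral.integral_const_mul, mul_assoc]
  gcongr
  rw [intervalIntegral.integral_of_le hT, ← integral_Icc_eq_integral_Ioc, Lp.norm_def,
    integral_norm_eq_lintegral_enorm hvi.1, ← eLpNorm_one_eq_lintegral_enorm, ← ENNReal.toReal_mul]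
  apply ENNReal.toReal_mono (ENNReal.mul_ne_top hctop (Lp.eLpNorm_ne_top v))
  rw [mul_comm]
  exact eLpNorm_le_eLpNorm_mul_rpow_measure_univ hp.1 hvi.1

/-- differentiability of the endpoint map `F(u) = γ_u(T)`. With
`A_u(s) = DX₀(γ_u(s)) + Σᵢ uᵢ(s) DXᵢ(γ_u(s))` and `N` the continuous solution of
`N(t) = I + ∫ₜ^T N(s)A_u(s) ds`, the map `F` is Fréchet differentiable at `u` with
differential `v ↦ ∫₀^T N(s)(Σᵢ vᵢ(s) Xᵢ(γ_u(s))) ds`. -/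
theorem stmt9 (n d : ℕ) (p : ℝ) (hp : 1 < p) [Fact (1 ≤ ENNReal.ofReal p)]
    (T : ℝ) (hT : 0 < T) (x : EuclideanSpace ℝ (Fin n))
    (X0 : EuclideanSpace ℝ (Fin n) → EuclideanSpace ℝ (Fin n))
    (X : Fin d → EuclideanSpace ℝ (Fin n) → EuclideanSpace ℝ (Fin n))
    (hX0smooth : ContDiff ℝ (⊤ : ℕ∞) X0) (hXsmooth : ∀ i, ContDiff ℝ (⊤ : ℕ∞) (X i))
    (hX0bdd : ∃ C, ∀ y, ‖X0 y‖ ≤ C) (hXbdd : ∃ C, ∀ i y, ‖X i y‖ ≤ C)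
    (hX0der : ∃ C, ∀ y, ‖fderiv ℝ X0 y‖ ≤ C)
    (hXder : ∃ C, ∀ i y, ‖fderiv ℝ (X i) y‖ ≤ C)
    (hX0der2 : ∃ C, ∀ y, ‖fderiv ℝ (fderiv ℝ X0) y‖ ≤ C)
    (hXder2 : ∃ C, ∀ i y, ‖fderiv ℝ (fderiv ℝ (X i)) y‖ ≤ C)
    (F : Lp (EuclideanSpace ℝ (Fin d)) (ENNReal.ofReal p)
        (volume.restrict (Set.Icc (0:ℝ) T)) → EuclideanSpace ℝ (Fin n))
    (hF : ∀ u : Lp (EuclideanSpace ℝ (Fin d)) (ENNReal.ofReal p)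
        (volume.restrict (Set.Icc (0:ℝ) T)),
      ∃ γ, IsTrajectory X0 X x T (⇑u) γ ∧ F u = γ T)
    (u : Lp (EuclideanSpace ℝ (Fin d)) (ENNReal.ofReal p)
      (volume.restrict (Set.Icc (0:ℝ) T)))
    (γu : ℝ → EuclideanSpace ℝ (Fin n))
    (hγu : IsTrajectory X0 X x T (⇑u) γu)
    (N : ℝ → (EuclideanSpace ℝ (Fin n) →L[ℝ] EuclideanSpace ℝ (Fin n)))
    (hNcont : ContinuousOn N (Set.Icc 0 T))
    (hN : ∀ t ∈ Set.Icc (0:ℝ) T,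
      N t = ContinuousLinearMap.id ℝ (EuclideanSpace ℝ (Fin n)) +
        ∫ s in t..T, (N s).comp
          (fderiv ℝ X0 (γu s) + ∑ i, u s i • fderiv ℝ (X i) (γu s))) :
    ∃ D : Lp (EuclideanSpace ℝ (Fin d)) (ENNReal.ofReal p)
        (volume.restrict (Set.Icc (0:ℝ) T)) →L[ℝ] EuclideanSpace ℝ (Fin n),
      HasFDerivAt F D u ∧
      ∀ v, D v = ∫ s in (0:ℝ)..T, N s (∑ i, v s i • X i (γu s)) := by
  obtain ⟨C1, hC1⟩ := hXbdd
  obtain ⟨C2, hC2⟩ := hX0der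
  obtain ⟨C3, hC3⟩ := hXder
  obtain ⟨C4, hC4⟩ := hX0der2
  obtain ⟨C5, hC5⟩ := hXder2
  set C := |C1| + |C2| + |C3| + |C4| + |C5| with hC
  have b1 := le_abs_self C1
  have b2 := le_abs_self C2
  have b3 := le_abs_self C3
  have b4 := le_abs_self C4
  have b5 := le_abs_self C5
  have a1 := abs_nonneg C1
  have a2 := abs_nonneg C2
  have a3 := abs_nonneg C3
  have a4 := abs_nonneg C4
  have a5 := abs_nonneg C5
  have hi : ∀ (v : Lp (EuclideanSpace ℝ (Fin d)) (ENNReal.ofReal p)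
        (volume.restrict (Set.Icc (0:ℝ) T))) (i : Fin d),
      IntegrableOn (fun s => v s i) (Icc 0 T) := fun v i =>
    (EuclideanSpace.proj (𝕜 := ℝ) i).integrable_comp ((Lp.memLp v).integrable Fact.out)
  obtain ⟨K, hK0, hK⟩ := traj_est hT.le hX0smooth hXsmooth (C := C) (by positivity)
    (fun i y => (hC1 i y).trans (by linarith)) (fun y => (hC2 y).trans (by linarith))
    (fun i y => (hC3 i y).trans (by linarith)) (fun y => (hC4 y).trans (by linarith))
    (fun i y => (hC5 i y).trans (by linarith)) (hi u) hγu hNcont hN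
  obtain ⟨K', hK'0, hK'⟩ := lp_est (d := d) (p := p) hT.le
  obtain ⟨CN, hCN⟩ := isCompact_Icc.exists_bound_of_continuousOn hNcont
  have hCN0 : 0 ≤ CN := (norm_nonneg _).trans (hCN T ⟨hT.le, le_rfl⟩)
  have hint : ∀ v : Lp (EuclideanSpace ℝ (Fin d)) (ENNReal.ofReal p)
        (volume.restrict (Set.Icc (0:ℝ) T)),
      IntegrableOn (fun s => N s (∑ i, v s i • X i (γu s))) (Icc 0 T) := fun v =>
    bil_int (ContinuousLinearMap.id ℝ _) hNcont (integrable_finsetSum _ fun i _ =>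
      (hi v i).smul_continuousOn ((hXsmooth i).continuous.comp_continuousOn hγu.1) isCompact_Icc)
  have hcongr : ∀ {E : Type} [NormedAddCommGroup E] [NormedSpace ℝ E] {f g : ℝ → E},
      f =ᵐ[volume.restrict (Icc 0 T)] g →
      ∫ s in (0:ℝ)..T, f s = ∫ s in (0:ℝ)..T, g s := by
    intro E _ _ f g h
    rw [intervalIntegral.integral_of_le hT.le, intervalIntegral.integral_of_le hT.le,
      ← integral_Icc_eq_integral_Ioc, ← integral_Icc_eq_integral_Ioc]
    exact integral_congr_ae h
  let D0 : Lp (EuclideanSpace ℝ (Fin d)) (ENNReal.ofReal p)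
        (volume.restrict (Set.Icc (0:ℝ) T)) →ₗ[ℝ] EuclideanSpace ℝ (Fin n) :=
    { toFun := fun v => ∫ s in (0:ℝ)..T, N s (∑ i, v s i • X i (γu s))
      map_add' := by
        intro v w
        rw [← intervalIntegral.integral_add (ii_ hT.le (hint v)) (ii_ hT.le (hint w))]
        apply hcongr
        filter_upwards [Lp.coeFn_add v w] with s hs
        rw [hs, ← map_add, ← Finset.sum_add_distrib]
        simp only [Pi.add_apply, PiLp.add_apply, add_smul]
      map_smul' := by
        intro c v
        rw [RingHom.id_apply, ← intervalIntegral.integral_smul]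
        apply hcongr
        filter_upwards [Lp.coeFn_smul c v] with s hs
        rw [hs, ← map_smul, Finset.smul_sum]
        simp only [Pi.smul_apply, PiLp.smul_apply, smul_eq_mul, mul_smul] }
  have hD0 : ∀ v, ‖D0 v‖ ≤ (CN * C * K') * ‖v‖ := by
    intro v
    have hvi : IntegrableOn (fun s => ∑ i, |v s i|) (Icc 0 T) :=
      integrable_finsetSum _ fun i _ => (hi v i).abs
    have : ‖D0 v‖ ≤ ∫ s in (0:ℝ)..T, (CN * C) * ∑ i, |v s i| := by
      apply intervalIntegral.norm_integral_le_of_norm_le hT.le _ ((ii_ hT.le hvi).const_mul _)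
      refine Filter.Eventually.of_forall fun s hs => ((N s).le_opNorm _).trans ?_
      rw [mul_assoc]
      refine mul_le_mul (hCN s (Ioc_subset_Icc_self hs)) ?_ (norm_nonneg _) hCN0
      rw [Finset.mul_sum]
      refine (norm_sum_le _ _).trans (Finset.sum_le_sum fun i _ => ?_)
      rw [norm_smul, Real.norm_eq_abs, mul_comm]
      exact mul_le_mul_of_nonneg_right ((hC1 i _).trans (by linarith)) (abs_nonneg _)
    rw [intervalIntegral.integral_const_mul] at this
    refine this.trans ?_
    rw [mul_assoc (CN * C)]
    exact mul_le_mul_of_nonneg_left (hK' v) (by positivity)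
  have main : ∀ (w : Lp (EuclideanSpace ℝ (Fin d)) (ENNReal.ofReal p)
        (volume.restrict (Set.Icc (0:ℝ) T))), ∀ η, IsTrajectory X0 X x T (⇑w) η →
      ‖η T - γu T - D0 (w - u)‖ ≤ K * (K' * ‖w - u‖) ^ 2 := by
    intro w η hη
    have h1 := hK w η (hi w) hη
    have e1 : D0 (w - u) = ∫ s in (0:ℝ)..T, N s (∑ i, (w s i - u s i) • X i (γu s)) := by
      apply hcongr
      filter_upwards [Lp.coeFn_sub w u] with s hs
      simp only [hs, Pi.sub_apply, PiLp.sub_apply]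
    have e2 : ∫ s in (0:ℝ)..T, ∑ i, |(w - u) s i| = ∫ s in (0:ℝ)..T, ∑ i, |w s i - u s i| := by
      apply hcongr
      filter_upwards [Lp.coeFn_sub w u] with s hs
      simp only [hs, Pi.sub_apply, PiLp.sub_apply]
    rw [← e1, ← e2] at h1
    refine h1.trans ?_
    have h0 : 0 ≤ ∫ s in (0:ℝ)..T, ∑ i, |(w - u) s i| :=
      intervalIntegral.integral_nonneg hT.le fun s _ => by positivity
    have := hK' (w - u)
    gcongr
  have hFu : F u = γu T := by
    obtain ⟨γ', hγ', e⟩ := hF u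
    have := main u γ' hγ'
    simp only [sub_self, map_zero, sub_zero, norm_zero, mul_zero, ne_eq, OfNat.ofNat_ne_zero,
      not_false_eq_true, zero_pow, norm_le_zero_iff] at this
    rw [e, sub_eq_zero.1 this]
  refine ⟨D0.mkContinuous _ hD0, ?_, fun v => rfl⟩
  have hO : (fun w => F w - F u - D0.mkContinuous _ hD0 (w - u)) =O[nhds u]
      fun w => ‖w - u‖ ^ 2 := by
    refine Asymptotics.IsBigO.of_bound (K * K' ^ 2) (Filter.Eventually.of_forall fun w => ?_)
    obtain ⟨η, hη, e⟩ := hF w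
    have := main w η hη
    rw [e, hFu, norm_pow, norm_norm]
    exact this.trans (le_of_eq (by ring))
  refine HasFDerivAt.of_isLittleO (hO.trans_isLittleO ?_)
  refine Asymptotics.IsLittleO.of_norm_right ?_
  have := (Asymptotics.isLittleO_norm_pow_id (E' := Lp (EuclideanSpace ℝ (Fin d)) (ENNReal.ofReal p)
        (volume.restrict (Set.Icc (0:ℝ) T))) (one_lt_two)).comp_tendsto (k := fun w => w - u)
        (l' := nhds u) (by
          have : Filter.Tendsto (fun w => w - u) (nhds u) (nhds (u - u)) :=
            (continuous_id.sub continuous_const).tendsto u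
          rwa [sub_self] at this)
  exact this.norm_right
end
end

section
/- Fix n, d ∈ ℕ, 1 < p < ∞, T > 0, x ∈ ℝ^n, and smooth vector fields X_0, X_1, …, X_d : ℝ^n → ℝ^n that are bounded and have bounded first and second derivatives. For w ∈ L^p([0,T], ℝ^d), let γ_w denote the trajectory of w starting at x, let A_w(s) = DX_0(γ_w(s)) + Σ_{i=1}^d w_i(s)·DX_i(γ_w(s)), and let N_w : [0,T] → ℝ^{n×n} be the unique continuous matrix-valued function satisfying N_w(t) = I + ∫_t^T N_w(s)A_w(s) ds for all t ∈ [0,T]. If a sequence u_n converges weakly to u in L^p([0,T], ℝ^d), then N_{u_n} converges to N_u uniformly on [0,T]. -/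
open MeasureTheory Set Filter Topology

noncomputable section

theorem gronwall_fwd (T : ℝ) (hT : 0 ≤ T) (y b : ℝ → ℝ) (ε : ℝ) (hε : 0 ≤ ε)
    (hy : ContinuousOn y (Icc 0 T)) (hb : IntervalIntegrable b volume 0 T)
    (hb0 : ∀ s, 0 ≤ b s)
    (h : ∀ t ∈ Icc (0:ℝ) T, y t ≤ ε + ∫ s in (0:ℝ)..t, b s * y s) :
    ∀ t ∈ Icc (0:ℝ) T, y t ≤ ε * Real.exp (∫ s in (0:ℝ)..T, b s) := by
  intro t ht
  have hu : uIcc (0:ℝ) T = Icc 0 T := uIcc_of_le hT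
  have hby : IntervalIntegrable (fun s => b s * y s) volume 0 T :=
    hb.mul_continuousOn (by rwa [hu])
  have sub : uIcc 0 t ⊆ uIcc 0 T := by
    rw [hu, uIcc_of_le ht.1]; exact Icc_subset_Icc_right ht.2
  have hb' : IntervalIntegrable b volume 0 t := hb.mono_set sub
  have hby' := hby.mono_set sub
  have hBnn : ∀ s ∈ uIcc 0 t, 0 ≤ ∫ r in (0:ℝ)..s, b r := by
    intro s hs
    rw [uIcc_of_le ht.1] at hs
    exact intervalIntegral.integral_nonneg hs.1 (fun r _ => hb0 r)
  have acB := hb'.absolutelyContinuousOnInterval_intervalIntegral (c := 0) (by simp)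
  have acG := hby'.absolutelyContinuousOnInterval_intervalIntegral (c := 0) (by simp)
  have acE : AbsolutelyContinuousOnInterval
      (fun s => Real.exp (-(∫ r in (0:ℝ)..s, b r))) 0 t := by
    rw [absolutelyContinuousOnInterval_iff] at acB ⊢
    intro e he
    obtain ⟨δ, hδ, H⟩ := acB e he
    refine ⟨δ, hδ, fun E hE hE2 => lt_of_le_of_lt (Finset.sum_le_sum ?_) (H E hE hE2)⟩
    intro i hi
    have h1 := hBnn _ (hE.1 i hi).1
    have h2 := hBnn _ (hE.1 i hi).2
    have key : ∀ a c : ℝ, 0 ≤ a → 0 ≤ c → a ≤ c →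
        |Real.exp (-a) - Real.exp (-c)| ≤ |a - c| := by
      intro a c ha hc hac
      rw [abs_of_nonneg (by simpa using hac), abs_of_nonpos (by linarith)]
      have e1 : Real.exp (-c) = Real.exp (-a) * Real.exp (-(c-a)) := by
        rw [← Real.exp_add]; ring_nf
      have e2 : 1 - (c - a) ≤ Real.exp (-(c-a)) := by
        have := Real.add_one_le_exp (-(c-a)); linarith
      have e3 : Real.exp (-a) ≤ 1 := by simpa using ha
      have e4 := Real.exp_pos (-a)
      rw [e1]
      nlinarith
    rw [Real.dist_eq, Real.dist_eq]
    rcases le_total (∫ r in (0:ℝ)..(E.2 i).1, b r) (∫ r in (0:ℝ)..(E.2 i).2, b r) with hh | hh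
    · exact key _ _ h1 h2 hh
    · rw [abs_sub_comm, abs_sub_comm (∫ r in (0:ℝ)..(E.2 i).1, b r)]
      exact key _ _ h2 h1 hh
  have acC : AbsolutelyContinuousOnInterval (fun _ : ℝ => ε) 0 t :=
    (LipschitzWith.const ε).lipschitzOnWith.absolutelyContinuousOnInterval
  have acH := acE.fun_mul (acC.fun_add acG)
  have hint := acH.integral_deriv_eq_sub
  have hneg : ∫ s in (0:ℝ)..t, deriv (fun s => Real.exp (-(∫ r in (0:ℝ)..s, b r)) *
      (ε + ∫ r in (0:ℝ)..s, b r * y r)) s ≤ 0 := by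
    have : 0 ≤ ∫ s in (0:ℝ)..t, -deriv (fun s => Real.exp (-(∫ r in (0:ℝ)..s, b r)) *
      (ε + ∫ r in (0:ℝ)..s, b r * y r)) s := by
      apply intervalIntegral.integral_nonneg_of_ae_restrict ht.1
      rw [EventuallyLE, ae_restrict_iff' measurableSet_Icc]
      filter_upwards [hb'.ae_hasDerivAt_integral, hby'.ae_hasDerivAt_integral] with s h1 h2 hs
      have hs' : s ∈ uIcc 0 t := by rwa [uIcc_of_le ht.1]
      have d1 := (h1 hs' 0 (by simp)).fun_neg.exp
      have d2 := (h2 hs' 0 (by simp)).const_add ε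
      have d3 := d1.fun_mul d2
      rw [d3.deriv]
      have := h s ⟨hs.1, hs.2.trans ht.2⟩
      have e4 := Real.exp_pos (-(∫ r in (0:ℝ)..s, b r))
      have : 0 ≤ Real.exp (-(∫ r in (0:ℝ)..s, b r)) * (b s *
        ((ε + ∫ r in (0:ℝ)..s, b r * y r) - y s)) :=
        mul_nonneg e4.le (mul_nonneg (hb0 s) (by linarith))
      simp only [Pi.zero_apply]
      nlinarith
    rw [intervalIntegral.integral_neg] at this
    linarith
  rw [hint] at hneg
  simp only [intervalIntegral.integral_same, neg_zero, Real.exp_zero, add_zero, one_mul] at hneg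
  have h1 : ε + ∫ s in (0:ℝ)..t, b s * y s ≤ ε * Real.exp (∫ s in (0:ℝ)..t, b s) := by
    have e4 := Real.exp_pos (∫ r in (0:ℝ)..t, b r)
    have e5 : Real.exp (∫ r in (0:ℝ)..t, b r) * Real.exp (-(∫ r in (0:ℝ)..t, b r)) = 1 := by
      rw [← Real.exp_add]; simp
    have := mul_le_mul_of_nonneg_left (sub_nonpos.1 hneg) e4.le
    rw [← mul_assoc, e5] at this
    linarith
  have h2 : ∫ s in (0:ℝ)..t, b s ≤ ∫ s in (0:ℝ)..T, b s :=
    intervalIntegral.integral_mono_interval le_rfl ht.1 ht.2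
      (Eventually.of_forall hb0) hb
  calc y t ≤ _ := h t ht
    _ ≤ _ := h1
    _ ≤ _ := by gcongr

theorem gronwall_two (T : ℝ) (hT : 0 ≤ T) (c : ℝ) (hc : c = 0 ∨ c = T)
    (y b : ℝ → ℝ) (ε : ℝ) (hε : 0 ≤ ε)
    (hy : ContinuousOn y (Icc 0 T)) (hb : IntervalIntegrable b volume 0 T)
    (hb0 : ∀ s, 0 ≤ b s) (hy0 : ∀ s, 0 ≤ y s)
    (h : ∀ t ∈ Icc (0:ℝ) T, y t ≤ ε + |∫ s in c..t, b s * y s|) :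
    ∀ t ∈ Icc (0:ℝ) T, y t ≤ ε * Real.exp (∫ s in (0:ℝ)..T, b s) := by
  rcases hc with rfl | rfl
  · apply gronwall_fwd T hT y b ε hε hy hb hb0
    intro t ht
    have := h t ht
    rwa [abs_of_nonneg (intervalIntegral.integral_nonneg ht.1
      (fun r _ => mul_nonneg (hb0 r) (hy0 r)))] at this
  · have := gronwall_fwd c hT (fun s => y (c - s)) (fun s => b (c - s)) ε hε
      (hy.comp (by fun_prop) (by intro s hs; simp at hs ⊢; constructor <;> linarith))
      (by simpa using (hb.comp_sub_left c).symm) (fun s => hb0 _) (by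
        intro t ht
        have h1 := h (c - t) ⟨by linarith [ht.2], by linarith [ht.1]⟩
        rw [intervalIntegral.integral_comp_sub_left (fun s => b s * y s) c]
        rw [intervalIntegral.integral_symm, abs_neg, abs_of_nonneg
          (intervalIntegral.integral_nonneg (by linarith [ht.1])
          (fun r _ => mul_nonneg (hb0 r) (hy0 r)))] at h1
        simpa using h1)
    intro t ht
    have h2 := this (c - t) ⟨by linarith [ht.2], by linarith [ht.1]⟩
    rw [intervalIntegral.integral_comp_sub_left b c] at h2
    simpa using h2

theorem ii_sub {F : Type*} [NormedAddCommGroup F] {f : ℝ → F} {T : ℝ} (hT : 0 ≤ T)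
    (hf : IntervalIntegrable f volume 0 T) :
    ∀ a ∈ Icc 0 T, ∀ t ∈ Icc 0 T, IntervalIntegrable f volume a t := by
  intro a ha t ht
  exact hf.mono_set (by rw [uIcc_of_le hT]; exact uIcc_subset_Icc ha ht)

theorem stab {E : Type*} [NormedAddCommGroup E] [NormedSpace ℝ E]
    (T : ℝ) (hT : 0 ≤ T) (c : ℝ) (hc : c = 0 ∨ c = T) (y0 : E)
    (y g r : ℕ → ℝ → E) (yl gl rl : ℝ → E) (b : ℕ → ℝ → ℝ) (M : ℝ)
    (hy : ∀ k, ContinuousOn (y k) (Icc 0 T)) (hyl : ContinuousOn yl (Icc 0 T))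
    (hg : ∀ k, IntervalIntegrable (g k) volume 0 T) (hgl : IntervalIntegrable gl volume 0 T)
    (hr : ∀ k, IntervalIntegrable (r k) volume 0 T) (hrl : IntervalIntegrable rl volume 0 T)
    (hb : ∀ k, IntervalIntegrable (b k) volume 0 T) (hb0 : ∀ k s, 0 ≤ b k s)
    (hbM : ∀ k, ∫ s in (0:ℝ)..T, b k s ≤ M)
    (eq : ∀ k, ∀ t ∈ Icc 0 T, y k t = y0 + ∫ s in c..t, g k s)
    (eql : ∀ t ∈ Icc 0 T, yl t = y0 + ∫ s in c..t, gl s)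
    (hR : TendstoUniformlyOn (fun k t => ∫ s in (0:ℝ)..t, r k s)
      (fun t => ∫ s in (0:ℝ)..t, rl s) atTop (Icc 0 T))
    (hbd : ∀ η > 0, ∀ᶠ k in atTop, ∀ s ∈ Icc 0 T,
      ‖g k s - gl s - (r k s - rl s)‖ ≤ b k s * (‖y k s - yl s‖ + η)) :
    TendstoUniformlyOn y yl atTop (Icc 0 T) := by
  have hM : 0 ≤ M := (intervalIntegral.integral_nonneg hT (fun s _ => hb0 0 s)).trans (hbM 0)
  have hu : uIcc (0:ℝ) T = Icc 0 T := uIcc_of_le hT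
  have hcm : c ∈ Icc 0 T := by
    rcases hc with rfl | rfl
    · exact ⟨le_rfl, hT⟩
    · exact ⟨hT, le_rfl⟩
  rw [Metric.tendstoUniformlyOn_iff] at hR ⊢
  intro e he
  obtain ⟨η, hη, hηe⟩ : ∃ η > 0, (2 * η + M * η) * Real.exp M < e := by
    refine ⟨e / (2 * ((2 + M) * Real.exp M)), by positivity, ?_⟩
    have : (2 + M) * Real.exp M > 0 := by positivity
    rw [← add_mul, mul_right_comm, mul_div_assoc']
    rw [div_lt_iff₀ (by positivity)]
    nlinarith
  filter_upwards [hR η hη, hbd η hη] with k h1 h2 t ht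
  have key : ∀ t ∈ Icc (0:ℝ) T, ‖y k t - yl t‖ ≤ (2 * η + M * η) +
      |∫ s in c..t, b k s * ‖y k s - yl s‖| := by
    intro t ht
    have ig := ii_sub hT (hg k) c hcm t ht
    have igl := ii_sub hT hgl c hcm t ht
    have ir := ii_sub hT (hr k) c hcm t ht
    have irl := ii_sub hT hrl c hcm t ht
    have e1 : y k t - yl t = (∫ s in c..t, (g k s - gl s - (r k s - rl s))) +
        ((∫ s in c..t, r k s) - ∫ s in c..t, rl s) := by
      rw [intervalIntegral.integral_sub (ig.sub igl) (ir.sub irl),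
        intervalIntegral.integral_sub ig igl, intervalIntegral.integral_sub ir irl,
        eq k t ht, eql t ht]
      abel
    have z : (0:ℝ) ∈ Icc 0 T := ⟨le_rfl, hT⟩
    have e2 : (∫ s in c..t, r k s) = (∫ s in (0:ℝ)..t, r k s) - ∫ s in (0:ℝ)..c, r k s := by
      rw [intervalIntegral.integral_interval_sub_left (ii_sub hT (hr k) 0 z t ht) (ii_sub hT (hr k) 0 z c hcm)]
    have e3 : (∫ s in c..t, rl s) = (∫ s in (0:ℝ)..t, rl s) - ∫ s in (0:ℝ)..c, rl s := by
      rw [intervalIntegral.integral_interval_sub_left (ii_sub hT hrl 0 z t ht) (ii_sub hT hrl 0 z c hcm)]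
    have e4 : ‖(∫ s in c..t, r k s) - ∫ s in c..t, rl s‖ ≤ 2 * η := by
      have a1 := (h1 t ht).le
      have a2 := (h1 c hcm).le
      rw [dist_comm, dist_eq_norm] at a1 a2
      rw [e2, e3, sub_sub_sub_comm]
      exact (norm_sub_le _ _).trans (by linarith)
    have i1 : IntervalIntegrable (fun s => b k s * ‖y k s - yl s‖) volume 0 T :=
      (hb k).mul_continuousOn (by rw [hu]; exact ((hy k).sub hyl).norm)
    have i2 : IntervalIntegrable (fun s => b k s * η) volume 0 T := (hb k).mul_const η
    have e5 : ‖∫ s in c..t, (g k s - gl s - (r k s - rl s))‖ ≤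
        |∫ s in c..t, (b k s * ‖y k s - yl s‖ + b k s * η)| := by
      apply intervalIntegral.norm_integral_le_abs_of_norm_le _ (ii_sub hT (i1.add i2) c hcm t ht)
      rw [ae_restrict_iff' measurableSet_uIoc]
      refine Eventually.of_forall (fun s hs => ?_)
      have := h2 s (uIcc_subset_Icc hcm ht (uIoc_subset_uIcc hs))
      rwa [mul_add] at this
    rw [intervalIntegral.integral_add (ii_sub hT i1 c hcm t ht) (ii_sub hT i2 c hcm t ht)] at e5
    have e6 : |∫ s in c..t, b k s * η| ≤ M * η := by
      rw [intervalIntegral.integral_mul_const, abs_mul, abs_of_pos hη]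
      gcongr
      refine le_trans ?_ (hbM k)
      refine (intervalIntegral.abs_integral_mono_interval (c := (0:ℝ)) (d := T) ?_
        (Eventually.of_forall (hb0 k)) (hb k)).trans ?_
      · intro s hs
        rw [uIoc_of_le hT]
        rw [mem_uIoc] at hs
        rcases hs with hs | hs
        · exact ⟨lt_of_le_of_lt hcm.1 hs.1, hs.2.trans ht.2⟩
        · exact ⟨lt_of_le_of_lt ht.1 hs.1, hs.2.trans hcm.2⟩
      · rw [abs_of_nonneg (intervalIntegral.integral_nonneg hT (fun s _ => hb0 k s))]
    rw [e1]
    have := abs_add_le (∫ s in c..t, b k s * ‖y k s - yl s‖) (∫ s in c..t, b k s * η)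
    refine (norm_add_le _ _).trans ?_
    linarith
  have := gronwall_two T hT c hc (fun s => ‖y k s - yl s‖) (b k) _ (by positivity)
    ((hy k).sub hyl).norm (hb k) (hb0 k) (fun s => norm_nonneg _) key t ht
  rw [dist_comm, dist_eq_norm]
  refine lt_of_le_of_lt (this.trans ?_) hηe
  gcongr
  exact hbM k

theorem lp_int {E : Type*} [NormedAddCommGroup E] (p : ℝ) (hp : 1 < p) (T : ℝ)
    (f : Lp E (ENNReal.ofReal p) (volume.restrict (Icc (0:ℝ) T))) (hT : 0 ≤ T) :
    IntervalIntegrable (⇑f) volume 0 T := by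
  have h1 : MemLp f (ENNReal.ofReal p) (volume.restrict (Icc (0:ℝ) T)) := Lp.memLp f
  have h2 := h1.integrable (by simpa using hp.le)
  rw [intervalIntegrable_iff_integrableOn_Icc_of_le hT]
  exact h2

theorem lp_bound {E : Type*} [NormedAddCommGroup E] (p : ℝ) (hp : 1 < p) (T : ℝ)
    (f : Lp E (ENNReal.ofReal p) (volume.restrict (Icc (0:ℝ) T)))
    (a b : ℝ) (ha : 0 ≤ a) (hab : a ≤ b) (hb : b ≤ T) :
    ∫ s in a..b, ‖f s‖ ≤ ‖f‖ * (b - a) ^ (1 - 1 / p) := by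
  have hsub : Ioc a b ⊆ Icc 0 T := fun s hs => ⟨ha.trans hs.1.le, hs.2.trans hb⟩
  have hle : volume.restrict (Ioc a b) ≤ volume.restrict (Icc (0:ℝ) T) :=
    Measure.restrict_mono hsub le_rfl
  have hm : AEStronglyMeasurable f (volume.restrict (Ioc a b)) :=
    (Lp.aestronglyMeasurable f).mono_measure hle
  rw [intervalIntegral.integral_of_le hab, integral_norm_eq_lintegral_enorm hm,
    ← eLpNorm_one_eq_lintegral_enorm]
  have h1 := eLpNorm_le_eLpNorm_mul_rpow_measure_univ (p := 1) (q := ENNReal.ofReal p)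
    (by simpa using hp.le) hm
  have h2 := eLpNorm_mono_measure (p := ENNReal.ofReal p) f hle
  have h0 : 0 ≤ 1 - 1 / p := by
    rw [sub_nonneg, div_le_one (by linarith)]; exact hp.le
  have h3 : eLpNorm f 1 (volume.restrict (Ioc a b)) ≤
      eLpNorm f (ENNReal.ofReal p) (volume.restrict (Icc (0:ℝ) T)) *
        ENNReal.ofReal ((b - a) ^ (1 - 1 / p)) := by
    refine h1.trans ?_
    gcongr
    simp only [Measure.restrict_apply_univ, Real.volume_Ioc, ENNReal.toReal_one,
      ENNReal.toReal_ofReal (by linarith : 0 ≤ p), div_one]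
    rw [ENNReal.ofReal_rpow_of_nonneg (by linarith) h0]
  have h4 := ENNReal.toReal_mono (ENNReal.mul_ne_top (Lp.eLpNorm_ne_top f) (by simp)) h3
  rw [ENNReal.toReal_mul, ENNReal.toReal_ofReal (Real.rpow_nonneg (by linarith) _),
    ← Lp.norm_def] at h4
  exact h4

theorem sum_int {E : Type*} [NormedAddCommGroup E] [NormedSpace ℝ E] {d : ℕ}
    (T : ℝ) (hT : 0 ≤ T) (w : ℝ → EuclideanSpace ℝ (Fin d))
    (hw : IntervalIntegrable w volume 0 T) (F : Fin d → ℝ → E)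
    (hF : ∀ i, ContinuousOn (F i) (Icc 0 T)) :
    IntervalIntegrable (fun s => ∑ i, w s i • F i s) volume 0 T := by
  have : ∀ i, IntervalIntegrable (fun s => w s i • F i s) volume 0 T := by
    intro i
    refine IntervalIntegrable.smul_continuousOn ?_ (by rw [uIcc_of_le hT]; exact hF i)
    rw [intervalIntegrable_iff] at hw ⊢
    exact (EuclideanSpace.proj (𝕜 := ℝ) i).integrable_comp hw
  have h2 := IntervalIntegrable.sum Finset.univ (f := fun i s => w s i • F i s) (fun i _ => this i)
  have e : (∑ i, fun s => w s i • F i s) = (fun s => ∑ i, w s i • F i s) := by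
    funext s; simp
  rwa [e] at h2

theorem sum_norm {E : Type*} [NormedAddCommGroup E] [NormedSpace ℝ E] {d : ℕ}
    (w : EuclideanSpace ℝ (Fin d)) (v : Fin d → E) (C : ℝ) (hv : ∀ i, ‖v i‖ ≤ C) :
    ‖∑ i, w i • v i‖ ≤ C * (d * ‖w‖) := by
  calc ‖∑ i, w i • v i‖ ≤ ∑ i : Fin d, ‖w i • v i‖ := norm_sum_le _ _
    _ ≤ ∑ i : Fin d, ‖w‖ * C := by
        apply Finset.sum_le_sum
        intro i _
        rw [norm_smul]
        gcongr
        · exact PiLp.norm_apply_le w i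
        · exact hv i
    _ = _ := by simp; ring

theorem weak_unif {E : Type*} [NormedAddCommGroup E] [NormedSpace ℝ E] [FiniteDimensional ℝ E]
    {d : ℕ} (p : ℝ) (hp : 1 < p) [Fact (1 ≤ ENNReal.ofReal p)] (T : ℝ) (hT : 0 ≤ T)
    (u : ℕ → Lp (EuclideanSpace ℝ (Fin d)) (ENNReal.ofReal p)
      (volume.restrict (Set.Icc (0:ℝ) T)))
    (ulim : Lp (EuclideanSpace ℝ (Fin d)) (ENNReal.ofReal p)
      (volume.restrict (Set.Icc (0:ℝ) T)))
    (hweak : ∀ φ : Lp (EuclideanSpace ℝ (Fin d)) (ENNReal.ofReal p)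
        (volume.restrict (Set.Icc (0:ℝ) T)) →L[ℝ] ℝ,
      Tendsto (fun k => φ (u k)) atTop (𝓝 (φ ulim)))
    (M : ℝ) (hM : ∀ k, ‖u k‖ ≤ M) (hMl : ‖ulim‖ ≤ M)
    (F : Fin d → ℝ → E) (hF : ∀ i, ContinuousOn (F i) (Icc 0 T)) :
    TendstoUniformlyOn (fun k t => ∫ s in (0:ℝ)..t, ∑ i, u k s i • F i s)
      (fun t => ∫ s in (0:ℝ)..t, ∑ i, ulim s i • F i s) atTop (Icc 0 T) := by
  have hu : uIcc (0:ℝ) T = Icc 0 T := uIcc_of_le hT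
  obtain ⟨C, hC0, hC⟩ : ∃ C, 0 ≤ C ∧ ∀ i, ∀ s ∈ Icc 0 T, ‖F i s‖ ≤ C := by
    choose c hc using fun i => isCompact_Icc.exists_bound_of_continuousOn (hF i)
    refine ⟨∑ i, |c i|, by positivity, fun i s hs => ?_⟩
    exact (hc i s hs).trans ((le_abs_self _).trans
      (Finset.single_le_sum (f := fun i => |c i|) (fun j _ => abs_nonneg _) (Finset.mem_univ i)))
  have hii : ∀ v : Lp (EuclideanSpace ℝ (Fin d)) (ENNReal.ofReal p)
      (volume.restrict (Set.Icc (0:ℝ) T)),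
      ∀ a ∈ Icc 0 T, ∀ t ∈ Icc 0 T,
      IntervalIntegrable (fun s => ∑ i, v s i • F i s) volume a t := by
    intro v a ha t ht
    exact (sum_int T hT _ (lp_int p hp T v hT) F hF).mono_set
      (by rw [hu]; exact uIcc_subset_Icc ha ht)
  have hbd : ∀ v : Lp (EuclideanSpace ℝ (Fin d)) (ENNReal.ofReal p)
      (volume.restrict (Set.Icc (0:ℝ) T)),
      ∀ a ∈ Icc 0 T, ∀ t ∈ Icc 0 T, a ≤ t →
      ‖∫ s in a..t, ∑ i, v s i • F i s‖ ≤ C * d * (t - a) ^ (1 - 1 / p) * ‖v‖ := by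
    intro v a ha t ht hat
    have h1 : ‖∫ s in a..t, ∑ i, v s i • F i s‖ ≤ ∫ s in a..t, C * (d * ‖v s‖) := by
      apply intervalIntegral.norm_integral_le_of_norm_le hat
      · refine Eventually.of_forall fun s hs => ?_
        exact sum_norm _ _ _ (fun i => hC i s ⟨ha.1.trans hs.1.le, hs.2.trans ht.2⟩)
      · exact (((lp_int p hp T v hT).mono_set
          (by rw [hu]; exact uIcc_subset_Icc ha ht)).norm.const_mul _).const_mul _
    rw [intervalIntegral.integral_const_mul, intervalIntegral.integral_const_mul] at h1
    have h2 := lp_bound p hp T v a t ha.1 hat ht.2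
    calc _ ≤ _ := h1
      _ ≤ C * (d * (‖v‖ * (t - a) ^ (1 - 1 / p))) := by gcongr
      _ = _ := by ring
  have z : (0:ℝ) ∈ Icc 0 T := ⟨le_rfl, hT⟩
  -- pointwise convergence
  have hpt : ∀ t ∈ Icc 0 T, Tendsto (fun k => ∫ s in (0:ℝ)..t, ∑ i, u k s i • F i s) atTop
      (𝓝 (∫ s in (0:ℝ)..t, ∑ i, ulim s i • F i s)) := by
    intro t ht
    have hres : ∀ {q : ℝ → Prop}, (∀ᵐ s ∂(volume.restrict (Icc (0:ℝ) T)), q s) →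
        ∀ᵐ s ∂volume, s ∈ uIoc 0 t → q s := by
      intro q hq
      rw [ae_restrict_iff' measurableSet_Icc] at hq
      filter_upwards [hq] with s hs hs'
      exact hs (uIcc_subset_Icc z ht (uIoc_subset_uIcc hs'))
    let L : Lp (EuclideanSpace ℝ (Fin d)) (ENNReal.ofReal p)
        (volume.restrict (Set.Icc (0:ℝ) T)) →ₗ[ℝ] E :=
      { toFun := fun v => ∫ s in (0:ℝ)..t, ∑ i, v s i • F i s
        map_add' := by
          intro v w
          rw [← intervalIntegral.integral_add (hii v 0 z t ht) (hii w 0 z t ht)]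
          apply intervalIntegral.integral_congr_ae
          filter_upwards [hres (Lp.coeFn_add v w)] with s hs hs'
          rw [← Finset.sum_add_distrib]
          refine Finset.sum_congr rfl fun i _ => ?_
          rw [hs hs', Pi.add_apply, PiLp.add_apply, add_smul]
        map_smul' := by
          intro c v
          rw [RingHom.id_apply, ← intervalIntegral.integral_smul]
          apply intervalIntegral.integral_congr_ae
          filter_upwards [hres (Lp.coeFn_smul c v)] with s hs hs'
          rw [Finset.smul_sum]
          refine Finset.sum_congr rfl fun i _ => ?_
          rw [hs hs', Pi.smul_apply, PiLp.smul_apply, smul_assoc] }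
    let Lc := L.mkContinuous (C * d * (t - 0) ^ (1 - 1 / p)) (fun v => hbd v 0 z t ht ht.1)
    let e := (Module.finBasis ℝ E).equivFunL
    have h1 : Tendsto (fun k => e (Lc (u k))) atTop (𝓝 (e (Lc ulim))) := by
      rw [tendsto_pi_nhds]
      intro j
      exact hweak (((ContinuousLinearMap.proj j).comp e.toContinuousLinearMap).comp Lc)
    have h2 := (e.symm.continuous.tendsto _).comp h1
    have h3 : Tendsto (fun k => Lc (u k)) atTop (𝓝 (Lc ulim)) := by
      simpa [Function.comp_def] using h2
    exact h3
  rw [Metric.tendstoUniformlyOn_iff]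
  intro ε hε
  have hα : 0 < 1 - 1 / p := by
    rw [sub_pos, div_lt_one (by linarith)]; exact hp
  have hM0 : 0 ≤ M := (norm_nonneg _).trans hMl
  obtain ⟨δ, hδ, hδε⟩ : ∃ δ > 0, C * d * δ ^ (1 - 1 / p) * M < ε / 3 := by
    have h1 : Tendsto (fun x : ℝ => C * d * x ^ (1 - 1 / p) * M) (𝓝 0)
        (𝓝 (C * d * (0:ℝ) ^ (1 - 1 / p) * M)) := by
      have := (Real.continuousAt_rpow_const 0 (1 - 1 / p) (Or.inr hα.le))
      exact ((this.tendsto.const_mul _).mul_const _)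
    rw [Real.zero_rpow hα.ne', mul_zero, zero_mul] at h1
    have h2 : ∀ᶠ x in 𝓝[>] (0:ℝ), C * d * x ^ (1 - 1 / p) * M < ε / 3 :=
      (h1.mono_left nhdsWithin_le_nhds).eventually (gt_mem_nhds (by positivity))
    obtain ⟨δ, h3, h4⟩ := (h2.and self_mem_nhdsWithin).exists
    exact ⟨δ, h4, h3⟩
  have hosc : ∀ v : Lp (EuclideanSpace ℝ (Fin d)) (ENNReal.ofReal p)
      (volume.restrict (Set.Icc (0:ℝ) T)), ‖v‖ ≤ M →
      ∀ a ∈ Icc 0 T, ∀ t ∈ Icc 0 T, dist a t < δ →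
      dist (∫ s in (0:ℝ)..a, ∑ i, v s i • F i s) (∫ s in (0:ℝ)..t, ∑ i, v s i • F i s) < ε / 3 := by
    intro v hv
    have : ∀ a ∈ Icc 0 T, ∀ t ∈ Icc 0 T, a ≤ t → dist a t < δ →
      dist (∫ s in (0:ℝ)..a, ∑ i, v s i • F i s) (∫ s in (0:ℝ)..t, ∑ i, v s i • F i s) < ε / 3 := by
      intro a ha t ht hat hd
      rw [dist_comm, dist_eq_norm, intervalIntegral.integral_interval_sub_left (hii v 0 z t ht)
        (hii v 0 z a ha)]
      refine lt_of_le_of_lt ((hbd v a ha t ht hat).trans ?_) hδε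
      rw [dist_comm, Real.dist_eq] at hd
      have := (le_abs_self _).trans hd.le
      gcongr
    intro a ha t ht hd
    rcases le_total a t with h | h
    · exact this a ha t ht h hd
    · rw [dist_comm] at hd ⊢; exact this t ht a ha h hd
  obtain ⟨S, hS, hSf, hcov⟩ := finite_cover_balls_of_compact (isCompact_Icc (a := (0:ℝ)) (b := T)) hδ
  have hev : ∀ᶠ k in atTop, ∀ a ∈ S, dist (∫ s in (0:ℝ)..a, ∑ i, u k s i • F i s)
      (∫ s in (0:ℝ)..a, ∑ i, ulim s i • F i s) < ε / 3 := by
    rw [hSf.eventually_all]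
    intro a ha
    exact (Metric.tendsto_nhds.1 (hpt a (hS ha))) _ (by positivity)
  filter_upwards [hev] with k hk t ht
  obtain ⟨a, ha, hta⟩ := mem_iUnion₂.1 (hcov ht)
  have h1 := hosc ulim hMl t ht a (hS ha) hta
  have h2 := hosc (u k) (hM k) t ht a (hS ha) hta
  have h3 := hk a ha
  rw [dist_comm] at h2 h3
  have := dist_triangle4 (∫ s in (0:ℝ)..t, ∑ i, ulim s i • F i s)
    (∫ s in (0:ℝ)..a, ∑ i, ulim s i • F i s) (∫ s in (0:ℝ)..a, ∑ i, u k s i • F i s)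
    (∫ s in (0:ℝ)..t, ∑ i, u k s i • F i s)
  linarith

theorem weak_bdd {E : Type*} [NormedAddCommGroup E] [NormedSpace ℝ E]
    (u : ℕ → E) (ul : E)
    (hweak : ∀ φ : E →L[ℝ] ℝ, Tendsto (fun k => φ (u k)) atTop (𝓝 (φ ul))) :
    ∃ M, ∀ k, ‖u k‖ ≤ M := by
  obtain ⟨M, hM⟩ := banach_steinhaus (g := fun k => NormedSpace.inclusionInDoubleDualLi ℝ (u k))
    (fun φ => by
      obtain ⟨C, hC⟩ := (hweak φ).norm.bddAbove_range
      refine ⟨C, fun k => ?_⟩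
      exact hC ⟨k, rfl⟩)
  exact ⟨M, fun k => by
    have := hM k
    rwa [LinearIsometry.norm_map] at this⟩

/-- Pointwise bound for an affine expression in the control. -/
theorem aff_norm {E : Type*} [NormedAddCommGroup E] [NormedSpace ℝ E] {d : ℕ}
    (w : EuclideanSpace ℝ (Fin d)) (a : E) (v : Fin d → E) (C : ℝ) (ha : ‖a‖ ≤ C)
    (hv : ∀ i, ‖v i‖ ≤ C) :
    ‖a + ∑ i, w i • v i‖ ≤ C * (1 + d * ‖w‖) := by
  have := sum_norm w v C hv
  refine (norm_add_le _ _).trans ?_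
  linarith

set_option maxHeartbeats 1000000

/-- with `A_w(s) = DX₀(γ_w(s)) + Σᵢ wᵢ(s) DXᵢ(γ_w(s))` and `N_w` the
continuous solution of `N_w(t) = I + ∫ₜ^T N_w(s)A_w(s) ds`, weak convergence
`u_k ⇀ u` in `L^p([0,T],ℝ^d)` implies `N_{u_k} → N_u` uniformly on `[0,T]`. -/
theorem stmt12 (n d : ℕ) (p : ℝ) (hp : 1 < p) [Fact (1 ≤ ENNReal.ofReal p)]
    (T : ℝ) (hT : 0 < T) (x : EuclideanSpace ℝ (Fin n))
    (X0 : EuclideanSpace ℝ (Fin n) → EuclideanSpace ℝ (Fin n))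
    (X : Fin d → EuclideanSpace ℝ (Fin n) → EuclideanSpace ℝ (Fin n))
    (hX0smooth : ContDiff ℝ (⊤ : ℕ∞) X0) (hXsmooth : ∀ i, ContDiff ℝ (⊤ : ℕ∞) (X i))
    (hX0bdd : ∃ C, ∀ y, ‖X0 y‖ ≤ C) (hXbdd : ∃ C, ∀ i y, ‖X i y‖ ≤ C)
    (hX0der : ∃ C, ∀ y, ‖fderiv ℝ X0 y‖ ≤ C)
    (hXder : ∃ C, ∀ i y, ‖fderiv ℝ (X i) y‖ ≤ C)
    (hX0der2 : ∃ C, ∀ y, ‖fderiv ℝ (fderiv ℝ X0) y‖ ≤ C)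
    (hXder2 : ∃ C, ∀ i y, ‖fderiv ℝ (fderiv ℝ (X i)) y‖ ≤ C)
    (u : ℕ → Lp (EuclideanSpace ℝ (Fin d)) (ENNReal.ofReal p)
      (volume.restrict (Set.Icc (0:ℝ) T)))
    (ulim : Lp (EuclideanSpace ℝ (Fin d)) (ENNReal.ofReal p)
      (volume.restrict (Set.Icc (0:ℝ) T)))
    (hweak : ∀ φ : Lp (EuclideanSpace ℝ (Fin d)) (ENNReal.ofReal p)
        (volume.restrict (Set.Icc (0:ℝ) T)) →L[ℝ] ℝ,
      Tendsto (fun k => φ (u k)) atTop (𝓝 (φ ulim)))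
    (γ : ℕ → ℝ → EuclideanSpace ℝ (Fin n))
    (γlim : ℝ → EuclideanSpace ℝ (Fin n))
    (hγ : ∀ k, IsTrajectory X0 X x T (⇑(u k)) (γ k))
    (hγlim : IsTrajectory X0 X x T (⇑ulim) γlim)
    (Nseq : ℕ → ℝ → (EuclideanSpace ℝ (Fin n) →L[ℝ] EuclideanSpace ℝ (Fin n)))
    (Nlim : ℝ → (EuclideanSpace ℝ (Fin n) →L[ℝ] EuclideanSpace ℝ (Fin n)))
    (hNseqcont : ∀ k, ContinuousOn (Nseq k) (Set.Icc 0 T))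
    (hNseq : ∀ k, ∀ t ∈ Set.Icc (0:ℝ) T,
      Nseq k t = ContinuousLinearMap.id ℝ (EuclideanSpace ℝ (Fin n)) +
        ∫ s in t..T, (Nseq k s).comp
          (fderiv ℝ X0 (γ k s) + ∑ i, u k s i • fderiv ℝ (X i) (γ k s)))
    (hNlimcont : ContinuousOn Nlim (Set.Icc 0 T))
    (hNlim : ∀ t ∈ Set.Icc (0:ℝ) T,
      Nlim t = ContinuousLinearMap.id ℝ (EuclideanSpace ℝ (Fin n)) +
        ∫ s in t..T, (Nlim s).comp
          (fderiv ℝ X0 (γlim s) + ∑ i, ulim s i • fderiv ℝ (X i) (γlim s))) :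
    TendstoUniformlyOn Nseq Nlim atTop (Set.Icc 0 T) := by
  obtain ⟨C1, hC1⟩ := hX0der
  obtain ⟨C2, hC2⟩ := hXder
  obtain ⟨C3, hC3⟩ := hX0der2
  obtain ⟨C4, hC4⟩ := hXder2
  obtain ⟨C, hC0, h1C, h2C, h3C, h4C⟩ : ∃ C, 0 ≤ C ∧ C1 ≤ C ∧ C2 ≤ C ∧ C3 ≤ C ∧ C4 ≤ C := by
    refine ⟨|C1| + |C2| + |C3| + |C4|, by positivity, ?_, ?_, ?_, ?_⟩ <;>
    linarith [le_abs_self C1, le_abs_self C2, le_abs_self C3, le_abs_self C4,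
      abs_nonneg C1, abs_nonneg C2, abs_nonneg C3, abs_nonneg C4]
  have hT' : (0:ℝ) ≤ T := hT.le
  have hu : uIcc (0:ℝ) T = Icc 0 T := uIcc_of_le hT'
  obtain ⟨M0, hM0⟩ := weak_bdd u ulim hweak
  obtain ⟨M, hM, hMl⟩ : ∃ M, (∀ k, ‖u k‖ ≤ M) ∧ ‖ulim‖ ≤ M :=
    ⟨max M0 ‖ulim‖, fun k => (hM0 k).trans (le_max_left _ _), le_max_right _ _⟩
  -- regularity of the fields
  have c0 : Continuous X0 := hX0smooth.continuous
  have cX : ∀ i, Continuous (X i) := fun i => (hXsmooth i).continuous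
  have d0 : Differentiable ℝ X0 := hX0smooth.differentiable (by simp)
  have dX : ∀ i, Differentiable ℝ (X i) := fun i => (hXsmooth i).differentiable (by simp)
  have h2le : (1 : WithTop ℕ∞) + 1 ≤ ((⊤ : ℕ∞) : WithTop ℕ∞) := by
    rw [one_add_one_eq_two]
    exact WithTop.coe_le_coe.2 (le_top : (2 : ℕ∞) ≤ ⊤)
  have cd0 : ContDiff ℝ 1 (fderiv ℝ X0) := hX0smooth.fderiv_right h2le
  have cdX : ∀ i, ContDiff ℝ 1 (fderiv ℝ (X i)) :=
    fun i => (hXsmooth i).fderiv_right h2le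
  have lip0 : ∀ a b, ‖X0 a - X0 b‖ ≤ C * ‖a - b‖ := fun a b =>
    convex_univ.norm_image_sub_le_of_norm_fderiv_le (fun z _ => d0 z)
      (fun z _ => (hC1 z).trans h1C) (mem_univ b) (mem_univ a)
  have lipX : ∀ i a b, ‖X i a - X i b‖ ≤ C * ‖a - b‖ := fun i a b =>
    convex_univ.norm_image_sub_le_of_norm_fderiv_le (fun z _ => dX i z)
      (fun z _ => (hC2 i z).trans h2C) (mem_univ b) (mem_univ a)
  have lipd0 : ∀ a b, ‖fderiv ℝ X0 a - fderiv ℝ X0 b‖ ≤ C * ‖a - b‖ := fun a b =>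
    convex_univ.norm_image_sub_le_of_norm_fderiv_le
      (fun z _ => (cd0.differentiable (by simp)) z)
      (fun z _ => (hC3 z).trans h3C) (mem_univ b) (mem_univ a)
  have lipdX : ∀ i a b, ‖fderiv ℝ (X i) a - fderiv ℝ (X i) b‖ ≤ C * ‖a - b‖ := fun i a b =>
    convex_univ.norm_image_sub_le_of_norm_fderiv_le
      (fun z _ => ((cdX i).differentiable (by simp)) z)
      (fun z _ => (hC4 i z).trans h4C) (mem_univ b) (mem_univ a)
  -- integrability of controls
  have iu : ∀ k, IntervalIntegrable (⇑(u k)) volume 0 T := fun k => lp_int p hp T (u k) hT'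
  have iul : IntervalIntegrable (⇑ulim) volume 0 T := lp_int p hp T ulim hT'
  let b : ℕ → ℝ → ℝ := fun k s => C * (1 + d * ‖u k s‖)
  have hb : ∀ k, IntervalIntegrable (b k) volume 0 T := fun k =>
    (intervalIntegrable_const.add ((iu k).norm.const_mul _)).const_mul _
  have hb0 : ∀ k s, 0 ≤ b k s := fun k s => by positivity
  have hbM : ∀ k, ∫ s in (0:ℝ)..T, b k s ≤ C * (T + d * (M * (T - 0) ^ (1 - 1 / p))) := by
    intro k
    have h1 := lp_bound p hp T (u k) 0 T le_rfl hT' le_rfl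
    have h2 : (0:ℝ) ≤ (T - 0) ^ (1 - 1 / p) := Real.rpow_nonneg (by linarith) _
    simp only [b]
    rw [intervalIntegral.integral_const_mul, intervalIntegral.integral_add
      intervalIntegrable_const ((iu k).norm.const_mul _), intervalIntegral.integral_const_mul]
    simp only [intervalIntegral.integral_const, smul_eq_mul, mul_one, sub_zero] at *
    have h3 : ∫ s in (0:ℝ)..T, ‖u k s‖ ≤ M * T ^ (1 - 1 / p) :=
      h1.trans (mul_le_mul_of_nonneg_right (hM k) h2)
    gcongr
  -- convergence of trajectories
  have hγconv : TendstoUniformlyOn γ γlim atTop (Icc 0 T) := by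
    have cXl : ∀ i, ContinuousOn (fun s => X i (γlim s)) (Icc 0 T) :=
      fun i => (cX i).comp_continuousOn hγlim.1
    have i0 : ∀ g : ℝ → EuclideanSpace ℝ (Fin n), ContinuousOn g (Icc 0 T) →
        IntervalIntegrable (fun s => X0 (g s)) volume 0 T := fun g hg =>
      ContinuousOn.intervalIntegrable (by rw [hu]; exact c0.comp_continuousOn hg)
    refine stab T hT' 0 (Or.inl rfl) x γ
      (fun k s => X0 (γ k s) + ∑ i, u k s i • X i (γ k s))
      (fun k s => ∑ i, u k s i • X i (γlim s)) γlim
      (fun s => X0 (γlim s) + ∑ i, ulim s i • X i (γlim s))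
      (fun s => ∑ i, ulim s i • X i (γlim s)) b _
      (fun k => (hγ k).1) hγlim.1 ?_ ?_ ?_ ?_ hb hb0 hbM (fun k => (hγ k).2) hγlim.2 ?_ ?_
    · exact fun k => (i0 _ (hγ k).1).add
        (sum_int T hT' _ (iu k) (fun i s => X i (γ k s))
          (fun i => (cX i).comp_continuousOn (hγ k).1))
    · exact (i0 _ hγlim.1).add (sum_int T hT' _ iul (fun i s => X i (γlim s)) cXl)
    · exact fun k => sum_int T hT' _ (iu k) (fun i s => X i (γlim s)) cXl
    · exact sum_int T hT' _ iul (fun i s => X i (γlim s)) cXl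
    · exact weak_unif p hp T hT' u ulim hweak M hM hMl (fun i s => X i (γlim s)) cXl
    · intro η hη
      refine Eventually.of_forall fun k s _ => ?_
      have e : X0 (γ k s) + ∑ i, u k s i • X i (γ k s) -
          (X0 (γlim s) + ∑ i, ulim s i • X i (γlim s)) -
          (∑ i, u k s i • X i (γlim s) - ∑ i, ulim s i • X i (γlim s)) =
          (X0 (γ k s) - X0 (γlim s)) + ∑ i, u k s i • (X i (γ k s) - X i (γlim s)) := by
        simp only [smul_sub, Finset.sum_sub_distrib]
        abel
      rw [e]
      refine (aff_norm (u k s) _ _ (C * ‖γ k s - γlim s‖) (lip0 _ _)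
        (fun i => lipX i _ _)).trans ?_
      have := hb0 k s
      have h2 : b k s * ‖γ k s - γlim s‖ ≤ b k s * (‖γ k s - γlim s‖ + η) := by
        gcongr; linarith
      refine le_trans (le_of_eq ?_) h2
      simp only [b]; ring
  -- convergence of the matrices
  obtain ⟨D, hD0, hD⟩ : ∃ D, 0 < D ∧ ∀ s ∈ Icc 0 T, ‖Nlim s‖ ≤ D := by
    obtain ⟨D, hD⟩ := isCompact_Icc.exists_bound_of_continuousOn hNlimcont
    exact ⟨|D| + 1, by positivity, fun s hs => (hD s hs).trans (by linarith [le_abs_self D])⟩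
  have cN : ∀ (N : ℝ → (EuclideanSpace ℝ (Fin n) →L[ℝ] EuclideanSpace ℝ (Fin n)))
      (g : ℝ → EuclideanSpace ℝ (Fin n)), ContinuousOn N (Icc 0 T) → ContinuousOn g (Icc 0 T) →
      ∀ i, ContinuousOn (fun s => -((N s).comp (fderiv ℝ (X i) (g s)))) (Icc 0 T) :=
    fun N g hN hg i => (hN.clm_comp ((cdX i).continuous.comp_continuousOn hg)).neg
  have cN0 : ∀ (N : ℝ → (EuclideanSpace ℝ (Fin n) →L[ℝ] EuclideanSpace ℝ (Fin n)))
      (g : ℝ → EuclideanSpace ℝ (Fin n)), ContinuousOn N (Icc 0 T) → ContinuousOn g (Icc 0 T) →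
      ContinuousOn (fun s => -((N s).comp (fderiv ℝ X0 (g s)))) (Icc 0 T) :=
    fun N g hN hg => (hN.clm_comp (cd0.continuous.comp_continuousOn hg)).neg
  have expand : ∀ (N A0 : EuclideanSpace ℝ (Fin n) →L[ℝ] EuclideanSpace ℝ (Fin n))
      (A : Fin d → (EuclideanSpace ℝ (Fin n) →L[ℝ] EuclideanSpace ℝ (Fin n)))
      (w : EuclideanSpace ℝ (Fin d)),
      -(N.comp (A0 + ∑ i, w i • A i)) = -(N.comp A0) + ∑ i, w i • (-(N.comp (A i))) := by
    intro N A0 A w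
    ext1 z
    simp [map_sum]
    abel
  have iN : ∀ (N : ℝ → (EuclideanSpace ℝ (Fin n) →L[ℝ] EuclideanSpace ℝ (Fin n)))
      (g : ℝ → EuclideanSpace ℝ (Fin n)) (w : ℝ → EuclideanSpace ℝ (Fin d)),
      ContinuousOn N (Icc 0 T) → ContinuousOn g (Icc 0 T) → IntervalIntegrable w volume 0 T →
      IntervalIntegrable (fun s => -((N s).comp
        (fderiv ℝ X0 (g s) + ∑ i, w s i • fderiv ℝ (X i) (g s)))) volume 0 T := by
    intro N g w hN hg hw
    simp only [expand]
    exact (ContinuousOn.intervalIntegrable (by rw [hu]; exact cN0 N g hN hg)).add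
      (sum_int T hT' w hw (fun i s => -((N s).comp (fderiv ℝ (X i) (g s)))) (cN N g hN hg))
  have cNl := cN Nlim γlim hNlimcont hγlim.1
  refine stab T hT' T (Or.inr rfl) (ContinuousLinearMap.id ℝ (EuclideanSpace ℝ (Fin n))) Nseq
    (fun k s => -((Nseq k s).comp
      (fderiv ℝ X0 (γ k s) + ∑ i, u k s i • fderiv ℝ (X i) (γ k s))))
    (fun k s => ∑ i, u k s i • (-((Nlim s).comp (fderiv ℝ (X i) (γlim s))))) Nlim
    (fun s => -((Nlim s).comp
      (fderiv ℝ X0 (γlim s) + ∑ i, ulim s i • fderiv ℝ (X i) (γlim s))))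
    (fun s => ∑ i, ulim s i • (-((Nlim s).comp (fderiv ℝ (X i) (γlim s))))) b _
    hNseqcont hNlimcont ?_ ?_ ?_ ?_ hb hb0 hbM ?_ ?_ ?_ ?_
  · exact fun k => iN _ _ _ (hNseqcont k) (hγ k).1 (iu k)
  · exact iN _ _ _ hNlimcont hγlim.1 iul
  · exact fun k => sum_int T hT' _ (iu k)
      (fun i s => -((Nlim s).comp (fderiv ℝ (X i) (γlim s)))) cNl
  · exact sum_int T hT' _ iul (fun i s => -((Nlim s).comp (fderiv ℝ (X i) (γlim s)))) cNl
  · intro k t ht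
    rw [hNseq k t ht, intervalIntegral.integral_neg, intervalIntegral.integral_symm t T, neg_neg]
  · intro t ht
    rw [hNlim t ht, intervalIntegral.integral_neg, intervalIntegral.integral_symm t T, neg_neg]
  · exact weak_unif p hp T hT' u ulim hweak M hM hMl
      (fun i s => -((Nlim s).comp (fderiv ℝ (X i) (γlim s)))) cNl
  · intro η hη
    filter_upwards [(Metric.tendstoUniformlyOn_iff.1 hγconv) (η / D) (by positivity)] with k hk s hs
    have hk' : ‖γ k s - γlim s‖ ≤ η / D := by
      have := (hk s hs).le
      rwa [dist_comm, dist_eq_norm] at this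
    have e : -((Nseq k s).comp (fderiv ℝ X0 (γ k s) + ∑ i, u k s i • fderiv ℝ (X i) (γ k s))) -
        -((Nlim s).comp (fderiv ℝ X0 (γlim s) + ∑ i, ulim s i • fderiv ℝ (X i) (γlim s))) -
        (∑ i, u k s i • (-((Nlim s).comp (fderiv ℝ (X i) (γlim s)))) -
          ∑ i, ulim s i • (-((Nlim s).comp (fderiv ℝ (X i) (γlim s))))) =
        -((Nseq k s - Nlim s).comp
          (fderiv ℝ X0 (γ k s) + ∑ i, u k s i • fderiv ℝ (X i) (γ k s))) -
        (Nlim s).comp ((fderiv ℝ X0 (γ k s) - fderiv ℝ X0 (γlim s)) +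
          ∑ i, u k s i • (fderiv ℝ (X i) (γ k s) - fderiv ℝ (X i) (γlim s))) := by
      ext1 z
      simp only [sum_apply, map_sum, ContinuousLinearMap.sub_apply,
        ContinuousLinearMap.neg_apply, ContinuousLinearMap.add_apply,
        ContinuousLinearMap.comp_apply, ContinuousLinearMap.smul_apply, map_add, map_sub,
        map_smul, smul_sub, smul_neg, Finset.sum_sub_distrib, Finset.sum_neg_distrib]
      abel
    rw [e]
    have n1 := aff_norm (u k s) (fderiv ℝ X0 (γ k s)) (fun i => fderiv ℝ (X i) (γ k s)) C
      ((hC1 _).trans h1C) (fun i => (hC2 i _).trans h2C)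
    have n2 := aff_norm (u k s) (fderiv ℝ X0 (γ k s) - fderiv ℝ X0 (γlim s))
      (fun i => fderiv ℝ (X i) (γ k s) - fderiv ℝ (X i) (γlim s)) (C * ‖γ k s - γlim s‖)
      (lipd0 _ _) (fun i => lipdX i _ _)
    refine (norm_sub_le _ _).trans ?_
    rw [norm_neg, mul_add]
    refine add_le_add ?_ ?_
    · refine (ContinuousLinearMap.opNorm_comp_le _ _).trans ?_
      rw [mul_comm]
      exact mul_le_mul_of_nonneg_right n1 (norm_nonneg _)
    · refine (ContinuousLinearMap.opNorm_comp_le _ _).trans ?_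
      have hbk := hb0 k s
      calc _ ≤ D * (C * ‖γ k s - γlim s‖ * (1 + d * ‖u k s‖)) :=
            mul_le_mul (hD s hs) n2 (norm_nonneg _) hD0.le
        _ = b k s * (D * ‖γ k s - γlim s‖) := by simp only [b]; ring
        _ ≤ b k s * (D * (η / D)) := by gcongr
        _ = b k s * η := by rw [mul_div_cancel₀ _ hD0.ne']
end
end
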